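/- arXiv:1303.5559 — 11 statements merged into one kernel-verified Lean document; each statement's English description precedes it below -/
import Mathlib

section
/- Let F be any field of characteristic 2. Then the veronesean-spin embedding ε of the symplectic generalized quadrangle W(3,F) in PG(F^10) is not relatively universal; that is, there exist a veronesean embedding ε' of W(3,F) and a non-injective morphism from ε' to ε. -/
open Cardinal

universe u v

/-- A non-singular conic in `PG(V)`: the image of the standard conic
`{⟨(s², st, t²)⟩}` of `PG(F³)` under the map induced by an injective linear map `F³ → V`. -/
def IsConic (F : Type*) [Field F] {V : Type v} [AddCommGroup V] [Module F V]
    (C : Set (Submodule F V)) : Prop :=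
  ∃ φ : (Fin 3 → F) →ₗ[F] V, Function.Injective φ ∧
    C = {p | ∃ s t : F, ¬(s = 0 ∧ t = 0) ∧
          p = Submodule.span F {φ ![s ^ 2, s * t, t ^ 2]}}

/-- A veronesean embedding of the point-line geometry `(P, L)` in `PG(V)`: an injective map
from points to 1-dimensional subspaces of `V`, mapping every line bijectively onto a
non-singular conic, with `ε(p) ∩ ⟨ε(l)⟩ = 0` for non-incident `(p,l)`, and whose image
spans `V`. -/
structure VerEmb (F : Type*) [Field F] (P : Type*) (L : Set (Set P))
    (V : Type v) [AddCommGroup V] [Module F V] where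
  toFun : P → Submodule F V
  point : ∀ p : P, ∃ w : V, w ≠ 0 ∧ toFun p = Submodule.span F {w}
  injective : Function.Injective toFun
  conic : ∀ l ∈ L, IsConic F (toFun '' l)
  disjoint_line : ∀ p : P, ∀ l ∈ L, p ∉ l → toFun p ⊓ (⨆ x ∈ l, toFun x) = ⊥
  spans : (⨆ p : P, toFun p) = ⊤

/-- `ε` (a map from points of `(P,L)` to points of `PG(V)`) is relatively universal: every
morphism to `ε` from any veronesean embedding `ε'` of `(P,L)` — i.e. every surjective
`σ`-semilinear map `f` (with `σ` a field automorphism) carrying each `ε'(p)` onto `ε(p)` —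
is injective. -/
def RelUniversal (F : Type*) [Field F] (P : Type*) (L : Set (Set P))
    (V : Type*) [AddCommGroup V] [Module F V] (ε : P → Submodule F V) : Prop :=
  ∀ (V' : Type u) [AddCommGroup V'] [Module F V'], ∀ (ε' : VerEmb F P L V')
    (σ : F →+* F), Function.Bijective σ → ∀ f : V' →ₛₗ[σ] V,
      Function.Surjective f → (∀ p : P, f '' (ε'.toFun p : Set V') = (ε p : Set V)) →
      Function.Injective f

/-- The alternating form `α(x,y) = x₁y₄ + x₂y₃ + x₃y₂ + x₄y₁` on `F⁴` (indices `0,…,3`). -/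
def alphaForm (F : Type*) [Field F] (x y : Fin 4 → F) : F :=
  x 0 * y 3 + x 1 * y 2 + x 2 * y 1 + x 3 * y 0

/-- The quadric veronesean map `ν₄ : F⁴ → F^10`, `x ↦ (x_i x_j)_{i ≤ j}`, with the ten
coordinates indexed by unordered pairs from `Fin 4`. -/
def nu4 (F : Type*) [Field F] (x : Fin 4 → F) : Sym2 (Fin 4) → F :=
  Sym2.lift ⟨fun i j => x i * x j, fun _ _ => mul_comm _ _⟩

/-- The points of the symplectic generalized quadrangle `W(3,F)`:
the 1-dimensional subspaces of `F⁴`. -/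
def SPoint (F : Type*) [Field F] :=
  {W : Submodule F (Fin 4 → F) // Module.finrank F ↥W = 1}

/-- The lines of `W(3,F)`: point sets of the totally `α`-isotropic 2-subspaces of `F⁴`. -/
def SLines (F : Type*) [Field F] : Set (Set (SPoint F)) :=
  {S | ∃ W : Submodule F (Fin 4 → F), Module.finrank F ↥W = 2 ∧
    (∀ x ∈ W, ∀ y ∈ W, alphaForm F x y = 0) ∧ S = {p : SPoint F | p.1 ≤ W}}

/-- The veronesean-spin embedding of `W(3,F)` in `PG(F^10)`: `⟨x⟩ ↦ ⟨ν₄(x)⟩`. -/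
def epsVS (F : Type*) [Field F] (p : SPoint F) : Submodule F (Sym2 (Fin 4) → F) :=
  Submodule.span F (nu4 F '' (p.1 : Set (Fin 4 → F)))


/-- `F` with scalars acting through the Frobenius map. -/
def Tw (F : Type) := F

instance twAdd (F : Type) [Field F] : AddCommGroup (Tw F) := inferInstanceAs (AddCommGroup F)

instance twMod (F : Type) [Field F] [CharP F 2] : Module F (Tw F) :=
  Module.compHom F (frobenius F 2)

theorem tw_smul (F : Type) [Field F] [CharP F 2] (a b : F) :
    (a • (show Tw F from b) : Tw F) = (show Tw F from a ^ 2 * b) := rfl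

theorem exists_semisqrt (F : Type) [Field F] [CharP F 2] :
    ∃ φ : F → F, (∀ a b, φ (a + b) = φ a + φ b) ∧ (∀ a b, φ (a ^ 2 * b) = a * φ b) ∧
      φ 1 = 1 := by
  let ψ : F →ₗ[F] Tw F :=
    { toFun := fun a => (show Tw F from (a ^ 2 : F))
      map_add' := fun a b => by
        show (a + b) ^ 2 = a ^ 2 + b ^ 2
        exact add_pow_char a b 2
      map_smul' := fun a b => by
        show (a * b) ^ 2 = a ^ 2 * b ^ 2
        ring }
  have hψ : LinearMap.ker ψ = ⊥ := by
    rw [LinearMap.ker_eq_bot']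
    intro m hm
    have : m ^ 2 = 0 := hm
    exact pow_eq_zero_iff (two_ne_zero) |>.1 this
  obtain ⟨g, hg⟩ := LinearMap.exists_leftInverse_of_injective ψ hψ
  refine ⟨fun b => g (show Tw F from b), fun a b => g.map_add _ _, fun a b => ?_, ?_⟩
  · exact g.map_smul a (show Tw F from b)
  · have := LinearMap.congr_fun hg 1
    have h2 : ψ 1 = (show Tw F from (1 : F)) := one_pow (M := F) 2
    rw [LinearMap.comp_apply, h2] at this
    exact this

section
variable (F : Type) [Field F]

/-- The quadratic form polarizing to `alphaForm`. -/
def qF (x : Fin 4 → F) : F := x 0 * x 3 + x 1 * x 2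

/-- The extended veronesean map. -/
def GG (φ : F → F) (x : Fin 4 → F) : (Sym2 (Fin 4) → F) × F := (nu4 F x, x 0 * φ (qF F x))

theorem nu4_mk (x : Fin 4 → F) (i j : Fin 4) : nu4 F x s(i, j) = x i * x j := rfl

theorem exists_Phi (f h : (Fin 4 → F) →ₗ[F] F) :
    ∃ Φ : (Sym2 (Fin 4) → F) →ₗ[F] F, ∀ x, Φ (nu4 F x) = f x * h x := by
  refine ⟨∑ i, ∑ j, (f (Pi.single i 1) * h (Pi.single j 1)) • LinearMap.proj s(i, j), ?_⟩
  intro x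
  have hf : ∀ k : (Fin 4 → F) →ₗ[F] F, k x = ∑ i, x i * k (Pi.single i 1) := by
    intro k
    conv_lhs => rw [LinearMap.pi_apply_eq_sum_univ k x]
    refine Finset.sum_congr rfl fun i _ => ?_
    rw [smul_eq_mul]
    congr 2
    ext j
    simp [Pi.single_apply, eq_comm]
  rw [hf f, hf h, Finset.sum_mul_sum]
  simp only [LinearMap.sum_apply, LinearMap.smul_apply, LinearMap.proj_apply, nu4_mk, smul_eq_mul]
  refine Finset.sum_congr rfl fun i _ => Finset.sum_congr rfl fun j _ => ?_
  ring

variable {F} {φ : F → F}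

theorem GG_smul (hm : ∀ a b, φ (a ^ 2 * b) = a * φ b) (c : F) (x : Fin 4 → F) :
    GG F φ (c • x) = c ^ 2 • GG F φ x := by
  have hq : qF F (c • x) = c ^ 2 * qF F x := by simp [qF]; ring
  refine Prod.ext ?_ ?_
  · funext z
    induction z with | _ i j => ?_
    simp [GG, nu4_mk]; ring
  · simp only [GG, hq, hm, Prod.smul_snd, Pi.smul_apply, smul_eq_mul]; ring

theorem span_GG (hm : ∀ a b, φ (a ^ 2 * b) = a * φ b) (w : Fin 4 → F) :
    Submodule.span F (GG F φ '' (Submodule.span F {w} : Set (Fin 4 → F))) =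
      Submodule.span F {GG F φ w} := by
  apply le_antisymm
  · rw [Submodule.span_le]
    rintro _ ⟨x, hx, rfl⟩
    obtain ⟨c, rfl⟩ := Submodule.mem_span_singleton.1 hx
    rw [GG_smul hm]
    exact Submodule.smul_mem _ _ (Submodule.mem_span_singleton_self _)
  · apply Submodule.span_mono
    rintro _ rfl
    exact ⟨w, Submodule.mem_span_singleton_self _, rfl⟩

theorem mem_of_GG (W : Submodule F (Fin 4 → F)) (x : Fin 4 → F) (c : F) (hc : c ≠ 0)
    (h : c • GG F φ x ∈ Submodule.span F (GG F φ '' (W : Set (Fin 4 → F)))) : x ∈ W := by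
  by_contra hx
  obtain ⟨f, hfx, hf⟩ := Submodule.exists_le_ker_of_notMem hx
  obtain ⟨Φ, hΦ⟩ := exists_Phi F f f
  have : Submodule.span F (GG F φ '' (W : Set (Fin 4 → F))) ≤
      LinearMap.ker (Φ ∘ₗ LinearMap.fst F _ F) := by
    rw [Submodule.span_le]
    rintro _ ⟨y, hy, rfl⟩
    have : f y = 0 := hf hy
    simp [GG, hΦ, this]
  have := this h
  simp [GG, hΦ, hc, hfx] at this

theorem GG_ne (w : Fin 4 → F) (hw : w ≠ 0) : GG F φ w ≠ 0 := by
  intro h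
  obtain ⟨i, hi⟩ := Function.ne_iff.1 hw
  have := congrFun (congrArg Prod.fst h) s(i, i)
  simp [GG, nu4_mk] at this
  exact hi this

theorem SPoint.exists_eq (p : SPoint F) :
    ∃ w : Fin 4 → F, w ≠ 0 ∧ p.1 = Submodule.span F {w} := by
  obtain ⟨w, hw, h⟩ := finrank_eq_one_iff'.1 p.2
  refine ⟨w, fun h0 => hw (Subtype.ext h0), ?_⟩
  apply le_antisymm
  · intro x hx
    obtain ⟨c, hc⟩ := h ⟨x, hx⟩
    exact Submodule.mem_span_singleton.2 ⟨c, congrArg Subtype.val hc⟩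
  · rw [Submodule.span_singleton_le_iff_mem]; exact w.2

theorem GG_comb [CharP F 2] (ha : ∀ a b, φ (a + b) = φ a + φ b)
    (hm : ∀ a b, φ (a ^ 2 * b) = a * φ b)
    (u v : Fin 4 → F) (huv : alphaForm F u v = 0) (s t : F) :
    GG F φ (s • u + t • v) = s ^ 2 • GG F φ u + (s * t) • (GG F φ (u + v) - GG F φ u - GG F φ v)
      + t ^ 2 • GG F φ v := by
  have hq : ∀ s t : F, qF F (s • u + t • v) = s ^ 2 * qF F u + t ^ 2 * qF F v := by
    intro s t
    have : qF F (s • u + t • v) = s ^ 2 * qF F u + t ^ 2 * qF F v + s * t * alphaForm F u v := by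
      simp [qF, alphaForm]; ring
    rw [this, huv]; ring
  have hq1 : qF F (u + v) = qF F u + qF F v := by simpa using hq 1 1
  refine Prod.ext ?_ ?_
  · funext z
    induction z with | _ i j => ?_
    simp [GG, nu4_mk]; ring
  · simp [GG, hq, hq1, ha, hm]; ring

theorem GG_span (h0 : φ 0 = 0) (h1 : φ 1 = 1) : Submodule.span F (Set.range (GG F φ)) = ⊤ := by
  set S := Submodule.span F (Set.range (GG F φ)) with hS
  have hG : ∀ x, GG F φ x ∈ S := fun x => Submodule.subset_span ⟨x, rfl⟩
  have e1 : ((0 : Sym2 (Fin 4) → F), (1 : F)) ∈ S := by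
    have : ((0 : Sym2 (Fin 4) → F), (1 : F)) =
        GG F φ ![1,1,1,0] - GG F φ ![1,1,0,0] - GG F φ ![1,0,1,0] - GG F φ ![0,1,1,0]
        + GG F φ ![1,0,0,0] + GG F φ ![0,1,0,0] + GG F φ ![0,0,1,0] := by
      refine Prod.ext ?_ ?_
      · funext z
        induction z with | _ i j => ?_
        fin_cases i <;> fin_cases j <;> simp [GG, nu4_mk]
      · simp [GG, qF, h0, h1]
    rw [this]
    exact S.add_mem (S.add_mem (S.add_mem (S.sub_mem (S.sub_mem (S.sub_mem (hG _) (hG _)) (hG _))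
      (hG _)) (hG _)) (hG _)) (hG _)
  have e2 : ∀ c : F, ((0 : Sym2 (Fin 4) → F), c) ∈ S := by
    intro c
    have := S.smul_mem c e1
    simpa using this
  have e3 : ∀ x, (nu4 F x, (0 : F)) ∈ S := by
    intro x
    have := S.sub_mem (hG x) (e2 (x 0 * φ (qF F x)))
    simpa [GG] using this
  have e4 : ∀ z : Sym2 (Fin 4), ((Pi.single z 1 : Sym2 (Fin 4) → F), (0 : F)) ∈ S := by
    intro z
    induction z with | _ i j => ?_
    by_cases hij : i = j
    · subst hij
      convert e3 (Pi.single i 1) using 2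
      funext z
      induction z with | _ a b => ?_
      simp only [nu4_mk, Pi.single_apply, Sym2.eq_iff]
      grind
    · have := S.sub_mem (S.sub_mem (e3 (Pi.single i 1 + Pi.single j 1)) (e3 (Pi.single i 1)))
        (e3 (Pi.single j 1))
      convert this using 1
      refine Prod.ext ?_ (by simp)
      funext z
      induction z with | _ a b => ?_
      simp only [nu4_mk, Pi.single_apply, Sym2.eq_iff, Prod.fst_sub, Pi.sub_apply, Pi.add_apply]
      grind
  rw [eq_top_iff]
  rintro ⟨y, c⟩ -
  have : (y, c) = (∑ z, y z • ((Pi.single z 1 : Sym2 (Fin 4) → F), (0 : F))) + (0, c) := by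
    refine Prod.ext ?_ ?_
    · funext a
      simp [Prod.fst_sum, Finset.sum_apply, Pi.single_apply]
    · simp [Prod.snd_sum]
  rw [this]
  exact S.add_mem (S.sum_mem fun z _ => S.smul_mem _ (e4 z)) (e2 c)

theorem GG_conic [CharP F 2] (ha : ∀ a b, φ (a + b) = φ a + φ b)
    (hm : ∀ a b, φ (a ^ 2 * b) = a * φ b) (W : Submodule F (Fin 4 → F))
    (hW : Module.finrank F W = 2) (hi : ∀ x ∈ W, ∀ y ∈ W, alphaForm F x y = 0) :
    IsConic F ((fun p : SPoint F => Submodule.span F (GG F φ '' (p.1 : Set (Fin 4 → F)))) ''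
      {p : SPoint F | p.1 ≤ W}) := by
  let b : Module.Basis (Fin 2) F W := Module.finBasisOfFinrankEq F W hW
  obtain ⟨f, hf⟩ := LinearMap.exists_extend (b.coord 0)
  obtain ⟨g, hg⟩ := LinearMap.exists_extend (b.coord 1)
  have hf' : ∀ x : W, f x = b.coord 0 x := fun x => LinearMap.congr_fun hf x
  have hg' : ∀ x : W, g x = b.coord 1 x := fun x => LinearMap.congr_fun hg x
  set u : Fin 4 → F := (b 0 : Fin 4 → F) with hu
  set v : Fin 4 → F := (b 1 : Fin 4 → F) with hv
  have huW : u ∈ W := (b 0).2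
  have hvW : v ∈ W := (b 1).2
  have fu : f u = 1 := by simp [hu, hf']
  have fv : f v = 0 := by simp [hv, hf']
  have gu : g u = 0 := by simp [hu, hg']
  have gv : g v = 1 := by simp [hv, hg']
  have hrep : ∀ x ∈ W, ∃ s t : F, x = s • u + t • v := by
    intro x hx
    have := b.sum_repr ⟨x, hx⟩
    rw [Fin.sum_univ_two] at this
    exact ⟨_, _, (congrArg Subtype.val this).symm⟩
  have hcomb := GG_comb ha hm u v (hi u huW v hvW)
  set B := GG F φ (u + v) - GG F φ u - GG F φ v with hB
  let ψ : (Fin 3 → F) →ₗ[F] (Sym2 (Fin 4) → F) × F :=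
    (LinearMap.proj 0 : (Fin 3 → F) →ₗ[F] F).smulRight (GG F φ u) +
      (LinearMap.proj 1 : (Fin 3 → F) →ₗ[F] F).smulRight B +
      (LinearMap.proj 2 : (Fin 3 → F) →ₗ[F] F).smulRight (GG F φ v)
  have hψ : ∀ z, ψ z = z 0 • GG F φ u + z 1 • B + z 2 • GG F φ v := fun z => rfl
  have hψ2 : ∀ s t : F, ψ ![s ^ 2, s * t, t ^ 2] = GG F φ (s • u + t • v) := by
    intro s t; rw [hψ, hcomb]; rfl
  have key : ∀ s t : F, Submodule.span F (GG F φ '' (Submodule.span F {s • u + t • v} :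
      Set (Fin 4 → F))) = Submodule.span F {ψ ![s ^ 2, s * t, t ^ 2]} := by
    intro s t; rw [hψ2, span_GG hm]
  refine ⟨ψ, ?_, ?_⟩
  · rw [injective_iff_map_eq_zero]
    intro z hz
    rw [hψ] at hz
    have hz1 := congrArg Prod.fst hz
    have hΦ : ∀ k l : (Fin 4 → F) →ₗ[F] F, z 0 * (k u * l u) + z 1 * (k (u + v) * l (u + v) -
        k u * l u - k v * l v) + z 2 * (k v * l v) = 0 := by
      intro k l
      obtain ⟨Φ, h⟩ := exists_Phi F k l
      have := congrArg Φ hz1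
      simpa only [hB, GG, Prod.fst_add, Prod.smul_fst, Prod.fst_sub, Prod.fst_zero, Φ.map_add,
        Φ.map_smul, Φ.map_sub, Φ.map_zero, h, smul_eq_mul] using this
    have h1 := hΦ f f
    have h2 := hΦ f g
    have h3 := hΦ g g
    simp [fu, fv, gu, gv] at h1 h2 h3
    funext i
    fin_cases i
    · exact h1
    · exact h2
    · exact h3
  · ext P
    constructor
    · rintro ⟨p, hp, rfl⟩
      obtain ⟨w, hw, hpw⟩ := p.exists_eq
      obtain ⟨s, t, rfl⟩ := hrep w (hp (hpw ▸ Submodule.mem_span_singleton_self w))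
      refine ⟨s, t, ?_, ?_⟩
      · rintro ⟨rfl, rfl⟩
        simp at hw
      · show Submodule.span F (GG F φ '' (p.1 : Set (Fin 4 → F))) = _
        rw [hpw, key]
    · rintro ⟨s, t, hst, rfl⟩
      have hw : s • u + t • v ≠ 0 := by
        intro h
        apply hst
        have h1 := congrArg f h
        have h2 := congrArg g h
        simp [fu, fv, gu, gv] at h1 h2
        exact ⟨h1, h2⟩
      refine ⟨⟨Submodule.span F {s • u + t • v}, finrank_span_singleton hw⟩, ?_, key s t⟩
      show Submodule.span F {s • u + t • v} ≤ W
      rw [Submodule.span_singleton_le_iff_mem]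
      exact W.add_mem (W.smul_mem _ huW) (W.smul_mem _ hvW)

/-- The veronesean embedding of dimension 11. -/
def bigEmb [CharP F 2] (ha : ∀ a b, φ (a + b) = φ a + φ b)
    (hm : ∀ a b, φ (a ^ 2 * b) = a * φ b) (h1 : φ 1 = 1) :
    VerEmb F (SPoint F) (SLines F) ((Sym2 (Fin 4) → F) × F) where
  toFun p := Submodule.span F (GG F φ '' (p.1 : Set (Fin 4 → F)))
  point p := by
    obtain ⟨w, hw, hp⟩ := p.exists_eq
    exact ⟨GG F φ w, GG_ne w hw, by rw [hp, span_GG hm]⟩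
  injective := by
    have main : ∀ p q : SPoint F, Submodule.span F (GG F φ '' (p.1 : Set (Fin 4 → F))) =
        Submodule.span F (GG F φ '' (q.1 : Set (Fin 4 → F))) → p.1 ≤ q.1 := by
      intro p q h x hx
      refine mem_of_GG (φ := φ) q.1 x 1 one_ne_zero ?_
      rw [one_smul, ← h]
      exact Submodule.subset_span ⟨x, hx, rfl⟩
    intro p q h
    exact Subtype.ext (le_antisymm (main p q h) (main q p h.symm))
  conic := by
    rintro l ⟨W, hW, hi, rfl⟩
    exact GG_conic ha hm W hW hi
  disjoint_line := by
    rintro p l ⟨W, hW, hi, rfl⟩ hp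
    obtain ⟨w, hw, hpw⟩ := p.exists_eq
    rw [eq_bot_iff]
    rintro y ⟨hy1, hy2⟩
    have hle : (⨆ x ∈ {p : SPoint F | p.1 ≤ W},
        Submodule.span F (GG F φ '' (x.1 : Set (Fin 4 → F)))) ≤
        Submodule.span F (GG F φ '' (W : Set (Fin 4 → F))) :=
      iSup₂_le fun x hx => Submodule.span_mono (Set.image_mono hx)
    have hy3 := hle hy2
    rw [hpw] at hy1
    have hy1' : y ∈ Submodule.span F {GG F φ w} := by
      rw [← span_GG hm]; exact hy1
    obtain ⟨c, rfl⟩ := Submodule.mem_span_singleton.1 hy1'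
    by_cases hc : c = 0
    · simp [hc]
    · exfalso
      apply hp
      show p.1 ≤ W
      rw [hpw, Submodule.span_singleton_le_iff_mem]
      exact mem_of_GG W w c hc hy3
  spans := by
    have h0 : φ 0 = 0 := by simpa using ha 0 0
    rw [eq_top_iff, ← GG_span h0 h1, Submodule.span_le]
    rintro _ ⟨x, rfl⟩
    by_cases hx : x = 0
    · have : GG F φ x = 0 := by
        subst hx
        simpa using GG_smul hm 0 0
      rw [this]; exact Submodule.zero_mem _
    · refine Submodule.mem_iSup_of_mem
        (⟨Submodule.span F {x}, finrank_span_singleton hx⟩ : SPoint F) ?_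
      exact Submodule.subset_span ⟨x, Submodule.mem_span_singleton_self _, rfl⟩

end

/-- Let `F` be any field of characteristic 2.  The veronesean-spin embedding
`ε : ⟨x⟩ ↦ ⟨ν₄(x)⟩` of the symplectic generalized quadrangle `W(3,F)` in `PG(F^10)` is not
relatively universal: there exist a veronesean embedding `ε'` of `W(3,F)` and a
non-injective morphism from `ε'` to `ε`. -/
theorem statement1 (F : Type) [Field F] [CharP F 2] :
    ¬ RelUniversal.{0} F (SPoint F) (SLines F) (Sym2 (Fin 4) → F) (epsVS F) := by
  intro H
  obtain ⟨φ, ha, hm, h1⟩ := exists_semisqrt F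
  have := H ((Sym2 (Fin 4) → F) × F) (bigEmb ha hm h1) (RingHom.id F) Function.bijective_id
    (LinearMap.fst F _ F) LinearMap.fst_surjective (by
      intro p
      show _ = ((Submodule.span F (nu4 F '' (p.1 : Set (Fin 4 → F))) :
        Submodule F (Sym2 (Fin 4) → F)) : Set (Sym2 (Fin 4) → F))
      rw [← Submodule.map_coe]
      congr 1
      show Submodule.map _ (Submodule.span F (GG F φ '' (p.1 : Set (Fin 4 → F)))) = _
      rw [Submodule.map_span, ← Set.image_comp]
      rfl)
  have h2 := @this (0, 1) (0, 0) rfl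
  simp at h2
end

section
/- Let F be a perfect field of characteristic 2. Then there exist a veronesean embedding ε' of the symplectic generalized quadrangle W(3,F) of dimension 14 and a surjective linear morphism f from ε' to the veronesean-spin embedding ε of W(3,F) in PG(F^10) whose kernel has dimension 4; in particular ε is a proper quotient of a 14-dimensional veronesean embedding of W(3,F). -/
open Cardinal

universe u v

section helpers

variable {F : Type} [Field F]

theorem vs_sq_inj [CharP F 2] {a b : F} (h : a ^ 2 = b ^ 2) : a = b :=
  CharTwo.sq_injective h

/-- The index equivalence. -/
noncomputable def vsE : Sym2 (Fin 4) ⊕ Fin 4 ≃ Fin 14 :=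
  Fintype.equivFinOfCardEq (by rw [Fintype.card_sum, Sym2.card]; rfl)

/-- The extra linear-on-lines function: the square root of the quadratic form. -/
def vsQ (r : F → F) (x : Fin 4 → F) : F := r (x 0 * x 3 + x 1 * x 2)

/-- The lifted veronesean map. -/
noncomputable def vsW (r : F → F) (x : Fin 4 → F) : Fin 14 → F :=
  fun k => Sum.elim (nu4 F x) (fun i => vsQ r x * x i) (vsE.symm k)

theorem vsW_inl (r : F → F) (x : Fin 4 → F) (i j : Fin 4) :
    vsW r x (vsE (Sum.inl s(i, j))) = x i * x j := by
  simp [vsW, nu4]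

theorem vsW_inr (r : F → F) (x : Fin 4 → F) (i : Fin 4) :
    vsW r x (vsE (Sum.inr i)) = vsQ r x * x i := by
  simp [vsW]

theorem vs_ext {z z' : Fin 14 → F}
    (h1 : ∀ i j, z (vsE (Sum.inl s(i, j))) = z' (vsE (Sum.inl s(i, j))))
    (h2 : ∀ i, z (vsE (Sum.inr i)) = z' (vsE (Sum.inr i))) : z = z' := by
  funext k
  obtain ⟨m, rfl⟩ := vsE.surjective k
  rcases m with e | i
  · induction e using Sym2.ind with
    | _ i j => exact h1 i j
  · exact h2 i

theorem vsQ_lin [CharP F 2] {r : F → F} (hr : ∀ a, r a ^ 2 = a) {u v : Fin 4 → F}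
    (h : alphaForm F u v = 0) (s t : F) :
    vsQ r (s • u + t • v) = s * vsQ r u + t * vsQ r v := by
  apply vs_sq_inj
  rw [CharTwo.add_sq, mul_pow, mul_pow]
  simp only [vsQ, hr, Pi.add_apply, Pi.smul_apply, smul_eq_mul]
  unfold alphaForm at h
  linear_combination s * t * h

theorem vsQ_smul [CharP F 2] {r : F → F} (hr : ∀ a, r a ^ 2 = a) (u : Fin 4 → F) (s : F) :
    vsQ r (s • u) = s * vsQ r u := by
  apply vs_sq_inj
  rw [mul_pow]
  simp only [vsQ, hr, Pi.smul_apply, smul_eq_mul]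
  ring

theorem vsW_smul [CharP F 2] {r : F → F} (hr : ∀ a, r a ^ 2 = a) (u : Fin 4 → F) (s : F) :
    vsW r (s • u) = s ^ 2 • vsW r u := by
  apply vs_ext
  · intro i j
    simp only [Pi.smul_apply, vsW_inl, smul_eq_mul]; ring
  · intro i
    simp only [Pi.smul_apply, vsW_inr, smul_eq_mul, vsQ_smul hr]; ring

/-- Polar part. -/
noncomputable def vsB (r : F → F) (u v : Fin 4 → F) : Fin 14 → F :=
  vsW r (u + v) - vsW r u - vsW r v

theorem vsB_inl (r : F → F) (u v : Fin 4 → F) (i j : Fin 4) :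
    vsB r u v (vsE (Sum.inl s(i, j))) = u i * v j + v i * u j := by
  simp only [vsB, Pi.sub_apply, Pi.add_apply, vsW_inl]; ring

theorem vsW_comb [CharP F 2] {r : F → F} (hr : ∀ a, r a ^ 2 = a) {u v : Fin 4 → F}
    (h : alphaForm F u v = 0) (s t : F) :
    vsW r (s • u + t • v) = s ^ 2 • vsW r u + (s * t) • vsB r u v + t ^ 2 • vsW r v := by
  have h1 : vsQ r (u + v) = vsQ r u + vsQ r v := by simpa using vsQ_lin hr h 1 1
  apply vs_ext
  · intro i j
    simp only [Pi.smul_apply, Pi.add_apply, vsW_inl, vsB_inl, smul_eq_mul]; ring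
  · intro i
    simp only [vsB, Pi.smul_apply, Pi.add_apply, Pi.sub_apply, vsW_inr, smul_eq_mul,
      vsQ_lin hr h, h1]; ring

/-- The diagonal coordinates. -/
noncomputable def vsD : (Fin 14 → F) →ₗ[F] (Fin 4 → F) :=
  LinearMap.funLeft F F (fun i => vsE (Sum.inl s(i, i)))

theorem vsD_W (r : F → F) (x : Fin 4 → F) : vsD (vsW r x) = fun i => x i ^ 2 := by
  funext i
  rw [vsD, LinearMap.funLeft_apply, vsW_inl, sq]

theorem vsD_B [CharP F 2] (r : F → F) (u v : Fin 4 → F) : vsD (vsB r u v) = 0 := by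
  funext i
  rw [vsD, LinearMap.funLeft_apply, vsB_inl, mul_comm (v i), CharTwo.add_self_eq_zero]; rfl

/-- The forgetful morphism. -/
noncomputable def vsF : (Fin 14 → F) →ₗ[F] (Sym2 (Fin 4) → F) :=
  LinearMap.funLeft F F (fun e => vsE (Sum.inl e))

theorem vsF_W (r : F → F) (x : Fin 4 → F) : vsF (vsW r x) = nu4 F x := by
  funext e
  simp [vsF, LinearMap.funLeft_apply, vsW]

theorem vs_sqrt_comb [CharP F 2] {r : F → F} (hr : ∀ a, r a ^ 2 = a) {x u v : Fin 4 → F} {a c : F}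
    (h : ∀ i, x i ^ 2 = a * u i ^ 2 + c * v i ^ 2) : x = r a • u + r c • v := by
  funext i
  apply vs_sq_inj
  simp only [Pi.add_apply, Pi.smul_apply, smul_eq_mul]
  rw [CharTwo.add_sq, mul_pow, mul_pow, hr, hr, h]

/-- The conic plane map. -/
noncomputable def vsPhi (r : F → F) (u v : Fin 4 → F) : (Fin 3 → F) →ₗ[F] (Fin 14 → F) :=
  Fintype.linearCombination F ![vsW r u, vsB r u v, vsW r v]

theorem vsPhi_apply (r : F → F) (u v : Fin 4 → F) (z : Fin 3 → F) :
    vsPhi r u v z = z 0 • vsW r u + z 1 • vsB r u v + z 2 • vsW r v := by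
  simp [vsPhi, Fintype.linearCombination_apply, Fin.sum_univ_three]

theorem vsPhi_inj [CharP F 2] {r : F → F} (hr : ∀ a, r a ^ 2 = a) {u v : Fin 4 → F}
    (hli : ∀ s t : F, s • u + t • v = 0 → s = 0 ∧ t = 0) :
    Function.Injective (vsPhi r u v) := by
  rw [injective_iff_map_eq_zero]
  intro z hz
  rw [vsPhi_apply] at hz
  have hd := congrArg vsD hz
  simp only [map_add, map_smul, vsD_W, vsD_B, map_zero, smul_zero, add_zero] at hd
  have h1 : (0 : Fin 4 → F) = r (z 0) • u + r (z 2) • v := by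
    apply vs_sqrt_comb hr
    intro i
    have := congrFun hd i
    simp only [Pi.add_apply, Pi.smul_apply, smul_eq_mul, Pi.zero_apply] at this ⊢
    rw [this]; simp
  obtain ⟨h2, h3⟩ := hli _ _ h1.symm
  have h0 : z 0 = 0 := by rw [← hr (z 0), h2]; simp
  have h4 : z 2 = 0 := by rw [← hr (z 2), h3]; simp
  have h5 : z 1 = 0 := by
    by_contra hne
    have hB : vsB r u v = 0 := by simpa [h0, h4, hne] using hz
    have huv : ∀ i j, u i * v j + v i * u j = 0 := by
      intro i j
      rw [← vsB_inl r, hB]; rfl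
    have hu : ∃ j, u j ≠ 0 := by
      by_contra hc
      push Not at hc
      have := (hli 1 0 (by funext i; simp [hc i])).1
      exact one_ne_zero this
    obtain ⟨j, hj⟩ := hu
    have := (hli (v j) (u j) (by
      funext i
      have := huv i j
      simp only [Pi.add_apply, Pi.smul_apply, smul_eq_mul, Pi.zero_apply]
      linear_combination this)).2
    exact hj this
  funext i
  fin_cases i
  · exact h0
  · exact h5
  · exact h4

theorem vs_point (p : SPoint F) : ∃ x : Fin 4 → F, x ≠ 0 ∧ p.1 = Submodule.span F {x} := by
  obtain ⟨⟨x, hx⟩, hne, h⟩ := finrank_eq_one_iff'.1 p.2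
  refine ⟨x, fun h => hne (Subtype.ext h), le_antisymm ?_ ?_⟩
  · intro y hy
    obtain ⟨c, hc⟩ := h ⟨y, hy⟩
    exact Submodule.mem_span_singleton.2 ⟨c, congrArg Subtype.val hc⟩
  · rw [Submodule.span_singleton_le_iff_mem]; exact hx

theorem vs_line (W : Submodule F (Fin 4 → F)) (hW : Module.finrank F W = 2) :
    ∃ u v : Fin 4 → F, u ∈ W ∧ v ∈ W ∧ (∀ s t : F, s • u + t • v = 0 → s = 0 ∧ t = 0) ∧
      ∀ x ∈ W, ∃ s t : F, x = s • u + t • v := by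
  let b := Module.finBasisOfFinrankEq F W hW
  refine ⟨b 0, b 1, (b 0).2, (b 1).2, ?_, ?_⟩
  · intro s t h
    have h' : s • b 0 + t • b 1 = 0 := Subtype.ext h
    have hl := Fintype.linearIndependent_iff.1 b.linearIndependent ![s, t] (by
      simpa [Fin.sum_univ_two] using h')
    exact ⟨hl 0, hl 1⟩
  · intro x hx
    refine ⟨b.repr ⟨x, hx⟩ 0, b.repr ⟨x, hx⟩ 1, ?_⟩
    have := b.sum_repr ⟨x, hx⟩
    rw [Fin.sum_univ_two] at this
    exact (congrArg Subtype.val this).symm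

/-- The embedding. -/
noncomputable def vsEps (r : F → F) (p : SPoint F) : Submodule F (Fin 14 → F) :=
  Submodule.span F (vsW r '' (p.1 : Set (Fin 4 → F)))

theorem vsEps_eq [CharP F 2] {r : F → F} (hr : ∀ a, r a ^ 2 = a) (p : SPoint F) {x : Fin 4 → F}
    (hp : p.1 = Submodule.span F {x}) : vsEps r p = Submodule.span F {vsW r x} := by
  apply le_antisymm
  · rw [vsEps, Submodule.span_le]
    rintro _ ⟨y, hy, rfl⟩
    rw [SetLike.mem_coe, hp, Submodule.mem_span_singleton] at hy
    obtain ⟨c, rfl⟩ := hy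
    rw [vsW_smul hr]
    exact Submodule.smul_mem _ _ (Submodule.mem_span_singleton_self _)
  · rw [Submodule.span_singleton_le_iff_mem]
    apply Submodule.subset_span
    refine ⟨x, ?_, rfl⟩
    rw [hp]; exact Submodule.mem_span_singleton_self _

theorem vsW_ne (r : F → F) {x : Fin 4 → F} (hx : x ≠ 0) : vsW r x ≠ 0 := by
  intro h
  apply hx
  funext i
  have := congrFun (congrArg vsD h) i
  rw [vsD_W, map_zero] at this
  simpa using this

theorem vs_inj [CharP F 2] {r : F → F} (hr : ∀ a, r a ^ 2 = a) :
    Function.Injective (vsEps r) := by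
  have key : ∀ p p' : SPoint F, vsEps r p = vsEps r p' → p.1 ≤ p'.1 := by
    intro p p' h
    obtain ⟨x, hx, hp⟩ := vs_point p
    obtain ⟨x', hx', hp'⟩ := vs_point p'
    rw [vsEps_eq hr p hp, vsEps_eq hr p' hp'] at h
    have hm : vsW r x ∈ Submodule.span F {vsW r x'} := h ▸ Submodule.mem_span_singleton_self _
    obtain ⟨c, hc⟩ := Submodule.mem_span_singleton.1 hm
    have hd := congrArg vsD hc
    rw [map_smul, vsD_W, vsD_W] at hd
    have : x = r c • x' + r 0 • (0 : Fin 4 → F) := by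
      apply vs_sqrt_comb hr
      intro i
      have := congrFun hd i
      simp only [Pi.smul_apply, smul_eq_mul] at this
      simp [this]
    rw [hp, hp', Submodule.span_singleton_le_iff_mem, this, smul_zero, add_zero]
    exact Submodule.smul_mem _ _ (Submodule.mem_span_singleton_self _)
  intro p p' h
  exact Subtype.ext (le_antisymm (key p p' h) (key p' p h.symm))

theorem vs_conic [CharP F 2] {r : F → F} (hr : ∀ a, r a ^ 2 = a) (l : Set (SPoint F))
    (hl : l ∈ SLines F) : IsConic F (vsEps r '' l) := by
  obtain ⟨W, hW, hiso, rfl⟩ := hl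
  obtain ⟨u, v, hu, hv, hli, hsp⟩ := vs_line W hW
  have hα := hiso u hu v hv
  have hphi : ∀ s t : F, vsPhi r u v ![s ^ 2, s * t, t ^ 2] = vsW r (s • u + t • v) := by
    intro s t
    rw [vsPhi_apply, vsW_comb hr hα]; rfl
  refine ⟨vsPhi r u v, vsPhi_inj hr hli, ?_⟩
  ext q
  simp only [Set.mem_image, Set.mem_setOf_eq, hphi]
  constructor
  · rintro ⟨p, hpW, rfl⟩
    obtain ⟨x, hx, hp⟩ := vs_point p
    have hxW : x ∈ W := hpW (hp ▸ Submodule.mem_span_singleton_self _)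
    obtain ⟨s, t, rfl⟩ := hsp x hxW
    refine ⟨s, t, ?_, vsEps_eq hr p hp⟩
    rintro ⟨rfl, rfl⟩
    simp at hx
  · rintro ⟨s, t, hst, rfl⟩
    have hne : s • u + t • v ≠ 0 := fun h => hst (hli s t h)
    refine ⟨⟨Submodule.span F {s • u + t • v}, finrank_span_singleton hne⟩, ?_,
      vsEps_eq hr _ rfl⟩
    rw [Submodule.span_singleton_le_iff_mem]
    exact W.add_mem (W.smul_mem _ hu) (W.smul_mem _ hv)

theorem vs_disj [CharP F 2] {r : F → F} (hr : ∀ a, r a ^ 2 = a) (p : SPoint F)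
    (l : Set (SPoint F)) (hl : l ∈ SLines F) (hpl : p ∉ l) :
    vsEps r p ⊓ (⨆ x ∈ l, vsEps r x) = ⊥ := by
  obtain ⟨W, hW, hiso, rfl⟩ := hl
  obtain ⟨u, v, hu, hv, hli, hsp⟩ := vs_line W hW
  obtain ⟨x, hx, hp⟩ := vs_point p
  have hle : (⨆ x ∈ {p : SPoint F | p.1 ≤ W}, vsEps r x) ≤
      (Submodule.span F {fun i => u i ^ 2, fun i => v i ^ 2}).comap vsD := by
    refine iSup₂_le fun y hy => ?_
    rw [vsEps, Submodule.span_le]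
    rintro _ ⟨z, hz, rfl⟩
    obtain ⟨s, t, rfl⟩ := hsp z (hy hz)
    rw [SetLike.mem_coe, Submodule.mem_comap, vsD_W, Submodule.mem_span_pair]
    refine ⟨s ^ 2, t ^ 2, ?_⟩
    funext i
    simp only [Pi.add_apply, Pi.smul_apply, smul_eq_mul]
    rw [CharTwo.add_sq, mul_pow, mul_pow]
  rw [eq_bot_iff]
  rintro z ⟨hz1, hz2⟩
  rw [SetLike.mem_coe, vsEps_eq hr p hp, Submodule.mem_span_singleton] at hz1
  obtain ⟨c, rfl⟩ := hz1
  by_contra hne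
  have hc : c ≠ 0 := by
    rintro rfl
    simp at hne
  have h2 := hle hz2
  rw [Submodule.mem_comap, map_smul, Submodule.smul_mem_iff _ hc, vsD_W,
    Submodule.mem_span_pair] at h2
  obtain ⟨a, b, hab⟩ := h2
  have hxe : x = r a • u + r b • v := vs_sqrt_comb hr fun i => (congrFun hab i).symm
  apply hpl
  rw [Set.mem_setOf_eq, hp, Submodule.span_singleton_le_iff_mem, hxe]
  exact W.add_mem (W.smul_mem _ hu) (W.smul_mem _ hv)

theorem vs_spans [CharP F 2] {r : F → F} (hr : ∀ a, r a ^ 2 = a) :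
    (⨆ p : SPoint F, vsEps r p) = ⊤ := by
  set S := ⨆ p : SPoint F, vsEps r p with hS
  have hmem : ∀ x : Fin 4 → F, x ≠ 0 → vsW r x ∈ S := by
    intro x hx
    refine (le_iSup (vsEps r) ⟨Submodule.span F {x}, finrank_span_singleton hx⟩) ?_
    exact Submodule.subset_span ⟨x, Submodule.mem_span_singleton_self _, rfl⟩
  by_contra hne
  obtain ⟨g, hg0, hg⟩ := Submodule.exists_le_ker_of_lt_top S (lt_top_iff_ne_top.2 hne)
  apply hg0
  have r0 : r 0 = 0 := by have := hr 0; simpa using this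
  have r1 : r 1 = 1 := vs_sq_inj (by rw [hr]; simp)
  let A : Fin 4 → Fin 4 → F := fun i j => g (Pi.single (vsE (Sum.inl s(i, j))) 1)
  let B : Fin 4 → F := fun i => g (Pi.single (vsE (Sum.inr i)) 1)
  have hexp : ∀ x : Fin 4 → F, x ≠ 0 →
      A 0 0 * (x 0 * x 0) + A 1 1 * (x 1 * x 1) + A 2 2 * (x 2 * x 2) + A 3 3 * (x 3 * x 3)
      + A 0 1 * (x 0 * x 1) + A 0 2 * (x 0 * x 2) + A 0 3 * (x 0 * x 3)
      + A 1 2 * (x 1 * x 2) + A 1 3 * (x 1 * x 3) + A 2 3 * (x 2 * x 3)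
      + r (x 0 * x 3 + x 1 * x 2) * (B 0 * x 0 + B 1 * x 1 + B 2 * x 2 + B 3 * x 3) = 0 := by
    intro x hx
    have h0 : g (vsW r x) = 0 := hg (hmem x hx)
    rw [LinearMap.pi_apply_eq_sum_univ g (vsW r x), ← vsE.sum_comp, Fintype.sum_sum_type] at h0
    have hu : (Finset.univ : Finset (Sym2 (Fin 4))) =
      {s(0, 0), s(1, 1), s(2, 2), s(3, 3), s(0, 1), s(0, 2), s(0, 3), s(1, 2), s(1, 3), s(2, 3)} := by
      decide
    rw [hu] at h0
    simp only [vsW_inr, vsQ, smul_eq_mul, Fin.sum_univ_four] at h0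
    repeat rw [Finset.sum_insert (by decide)] at h0
    rw [Finset.sum_singleton] at h0
    simp only [vsW_inl] at h0
    have hs : ∀ k : Fin 14, (fun j => if k = j then (1 : F) else 0) = Pi.single k 1 := by
      intro k
      funext j
      rw [Pi.single_apply]
      simp only [eq_comm]
    simp only [hs] at h0
    simp only [A, B]
    linear_combination h0
  have ne : ∀ (x : Fin 4 → F) (i : Fin 4), x i = 1 → x ≠ 0 := by
    rintro x i hi rfl
    exact zero_ne_one hi
  have a00 : A 0 0 = 0 := by simpa [r0, r1] using hexp ![1, 0, 0, 0] (ne _ 0 rfl)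
  have a11 : A 1 1 = 0 := by simpa [r0, r1] using hexp ![0, 1, 0, 0] (ne _ 1 rfl)
  have a22 : A 2 2 = 0 := by simpa [r0, r1] using hexp ![0, 0, 1, 0] (ne _ 2 rfl)
  have a33 : A 3 3 = 0 := by simpa [r0, r1] using hexp ![0, 0, 0, 1] (ne _ 3 rfl)
  have a01 : A 0 1 = 0 := by simpa [r0, r1, a00, a11] using hexp ![1, 1, 0, 0] (ne _ 0 rfl)
  have a02 : A 0 2 = 0 := by simpa [r0, r1, a00, a22] using hexp ![1, 0, 1, 0] (ne _ 0 rfl)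
  have a13 : A 1 3 = 0 := by simpa [r0, r1, a11, a33] using hexp ![0, 1, 0, 1] (ne _ 1 rfl)
  have a23 : A 2 3 = 0 := by simpa [r0, r1, a22, a33] using hexp ![0, 0, 1, 1] (ne _ 2 rfl)
  have h03 : A 0 3 + (B 0 + B 3) = 0 := by
    simpa [r0, r1, a00, a33] using hexp ![1, 0, 0, 1] (ne _ 0 rfl)
  have h12 : A 1 2 + (B 1 + B 2) = 0 := by
    simpa [r0, r1, a11, a22] using hexp ![0, 1, 1, 0] (ne _ 1 rfl)
  have k1 : A 0 3 + (B 0 + B 1 + B 3) = 0 := by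
    simpa [r0, r1, a00, a33, a11, a01, a13] using hexp ![1, 1, 0, 1] (ne _ 0 rfl)
  have k2 : A 0 3 + (B 0 + B 2 + B 3) = 0 := by
    simpa [r0, r1, a00, a33, a22, a02, a23] using hexp ![1, 0, 1, 1] (ne _ 0 rfl)
  have k0 : A 1 2 + (B 0 + B 1 + B 2) = 0 := by
    simpa [r0, r1, a00, a11, a22, a01, a02] using hexp ![1, 1, 1, 0] (ne _ 0 rfl)
  have k3 : A 1 2 + (B 1 + B 2 + B 3) = 0 := by
    simpa [r0, r1, a33, a11, a22, a13, a23] using hexp ![0, 1, 1, 1] (ne _ 1 rfl)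
  have b1 : B 1 = 0 := by linear_combination k1 - h03
  have b2 : B 2 = 0 := by linear_combination k2 - h03
  have b0 : B 0 = 0 := by linear_combination k0 - h12
  have b3 : B 3 = 0 := by linear_combination k3 - h12
  have a03 : A 0 3 = 0 := by linear_combination h03 - b0 - b3
  have a12 : A 1 2 = 0 := by linear_combination h12 - b1 - b2
  have hsymm : ∀ i j, A i j = A j i := by
    intro i j
    simp only [A, Sym2.eq_swap]
  have hA : ∀ i j, A i j = 0 := by
    have hle : ∀ i j, i ≤ j → A i j = 0 := by
      intro i j hij
      fin_cases i <;> fin_cases j <;> first | assumption | (exact absurd hij (by decide))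
    intro i j
    rcases le_total i j with h | h
    · exact hle i j h
    · rw [hsymm]; exact hle j i h
  have hB : ∀ i, B i = 0 := by
    intro i
    fin_cases i <;> assumption
  apply LinearMap.pi_ext'
  intro k
  ext
  obtain ⟨m, rfl⟩ := vsE.surjective k
  rcases m with e | i
  · induction e using Sym2.ind with
    | _ i j => exact hA i j
  · exact hB i

end helpers

/-- Let `F` be a perfect field of characteristic 2.  There exist a veronesean
embedding `ε'` of `W(3,F)` of dimension 14 (codomain `F^14`) and a surjective linear
morphism `f` from `ε'` to the veronesean-spin embedding `ε : ⟨x⟩ ↦ ⟨ν₄(x)⟩` in `PG(F^10)`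
whose kernel has dimension 4; in particular `ε` is a proper quotient of a 14-dimensional
veronesean embedding of `W(3,F)`. -/
theorem statement2 (F : Type) [Field F] [CharP F 2]
    (hperf : Function.Surjective fun x : F => x ^ 2) :
    ∃ (ε' : VerEmb F (SPoint F) (SLines F) (Fin 14 → F))
      (f : (Fin 14 → F) →ₗ[F] (Sym2 (Fin 4) → F)),
      Function.Surjective f ∧
      (∀ p : SPoint F,
        f '' (ε'.toFun p : Set (Fin 14 → F)) = (epsVS F p : Set (Sym2 (Fin 4) → F))) ∧
      Module.finrank F ↥(LinearMap.ker f) = 4 := by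
  choose r hr using hperf
  have hr : ∀ a, r a ^ 2 = a := hr
  have hsurj : Function.Surjective (vsF (F := F)) :=
    LinearMap.funLeft_surjective_of_injective F F _ (vsE.injective.comp Sum.inl_injective)
  refine ⟨⟨vsEps r, ?_, vs_inj hr, vs_conic hr, vs_disj hr, vs_spans hr⟩, vsF, hsurj, ?_, ?_⟩
  · intro p
    obtain ⟨x, hx, hp⟩ := vs_point p
    exact ⟨vsW r x, vsW_ne r hx, vsEps_eq hr p hp⟩
  · intro p
    change vsF '' (vsEps r p : Set (Fin 14 → F)) = _
    rw [← Submodule.map_coe, vsEps, Submodule.map_span, Set.image_image, epsVS]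
    simp only [vsF_W]
  · have h := LinearMap.finrank_range_add_finrank_ker (vsF (F := F))
    rw [LinearMap.range_eq_top.2 hsurj, finrank_top, Module.finrank_fintype_fun_eq_card,
      Module.finrank_fintype_fun_eq_card, Sym2.card, Fintype.card_fin, Fintype.card_fin] at h
    have : Nat.choose (4 + 1) 2 = 10 := rfl
    omega
end

section
/- Let F be a field of characteristic 2 and let u, v ∈ F⁴ satisfy α(u,v) = u₁v₄ + u₂v₃ + u₃v₂ + u₄v₁ = 0. Put w_{ij} = u_i v_j + u_j v_i for 1 ≤ i < j ≤ 4. Then w₁₄ = w₂₃ and w₁₄² + w₁₂w₃₄ + w₁₃w₂₄ = 0. -/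
/-- Let `F` be a field of characteristic 2 and `u, v ∈ F⁴` satisfy
`α(u,v) = u₁v₄ + u₂v₃ + u₃v₂ + u₄v₁ = 0`.  With `w_{ij} = u_i v_j + u_j v_i` one has
`w₁₄ = w₂₃` and `w₁₄² + w₁₂w₃₄ + w₁₃w₂₄ = 0`.  (Indices are shifted to `0,…,3`.) -/
theorem statement3 (F : Type*) [Field F] [CharP F 2] (u v : Fin 4 → F)
    (h : u 0 * v 3 + u 1 * v 2 + u 2 * v 1 + u 3 * v 0 = 0) :
    (u 0 * v 3 + u 3 * v 0 = u 1 * v 2 + u 2 * v 1) ∧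
    (u 0 * v 3 + u 3 * v 0) ^ 2
      + (u 0 * v 1 + u 1 * v 0) * (u 2 * v 3 + u 3 * v 2)
      + (u 0 * v 2 + u 2 * v 0) * (u 1 * v 3 + u 3 * v 1) = 0 := by
  have h2 : (2 : F) = 0 := CharTwo.two_eq_zero
  constructor
  · linear_combination h - (u 1 * v 2 + u 2 * v 1) * h2
  · linear_combination (u 0 * v 3 + u 3 * v 0) * h
      + (u 0 * u 3 * v 1 * v 2 + u 1 * u 2 * v 0 * v 3) * h2
end

section
/- Let F be a field of characteristic 2 and let (w_{ij})_{1≤i<j≤4} ∈ F⁶ be a nonzero vector with w₁₄ = w₂₃ and w₁₄² + w₁₂w₃₄ + w₁₃w₂₄ = 0. Then there exist linearly independent vectors u, v ∈ F⁴ such that w_{ij} = u_i v_j + u_j v_i for all 1 ≤ i < j ≤ 4, and the 2-dimensional subspace ⟨u,v⟩ is totally isotropic for α (that is, α(u,v) = 0). -/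
/-- Let `F` be a field of characteristic 2 and `(w_{ij})_{1≤i<j≤4} ∈ F⁶` a nonzero
vector with `w₁₄ = w₂₃` and `w₁₄² + w₁₂w₃₄ + w₁₃w₂₄ = 0`.  Then there are linearly independent
`u, v ∈ F⁴` with `w_{ij} = u_i v_j + u_j v_i` for all `1 ≤ i < j ≤ 4` such that the plane
`⟨u,v⟩` is totally isotropic for the alternating form
`α(x,y) = x₁y₄ + x₂y₃ + x₃y₂ + x₄y₁` (that is, `α(u,v) = 0`).  (Indices shifted to `0,…,3`.) -/
theorem statement4 (F : Type*) [Field F] [CharP F 2]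
    (w01 w02 w03 w12 w13 w23 : F)
    (hne : ¬ (w01 = 0 ∧ w02 = 0 ∧ w03 = 0 ∧ w12 = 0 ∧ w13 = 0 ∧ w23 = 0))
    (hsub : w03 = w12)
    (hquad : w03 ^ 2 + w01 * w23 + w02 * w13 = 0) :
    ∃ u v : Fin 4 → F, LinearIndependent F ![u, v] ∧
      w01 = u 0 * v 1 + u 1 * v 0 ∧
      w02 = u 0 * v 2 + u 2 * v 0 ∧
      w03 = u 0 * v 3 + u 3 * v 0 ∧
      w12 = u 1 * v 2 + u 2 * v 1 ∧
      w13 = u 1 * v 3 + u 3 * v 1 ∧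
      w23 = u 2 * v 3 + u 3 * v 2 ∧
      (∀ x ∈ Submodule.span F {u, v}, ∀ y ∈ Submodule.span F {u, v},
        x 0 * y 3 + x 1 * y 2 + x 2 * y 1 + x 3 * y 0 = 0) ∧
      u 0 * v 3 + u 1 * v 2 + u 2 * v 1 + u 3 * v 0 = 0 := by
  have h2 : (2 : F) = 0 := CharTwo.two_eq_zero
  subst hsub
  have core : ∃ u v : Fin 4 → F,
      w01 = u 0 * v 1 + u 1 * v 0 ∧
      w02 = u 0 * v 2 + u 2 * v 0 ∧
      w03 = u 0 * v 3 + u 3 * v 0 ∧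
      w03 = u 1 * v 2 + u 2 * v 1 ∧
      w13 = u 1 * v 3 + u 3 * v 1 ∧
      w23 = u 2 * v 3 + u 3 * v 2 := by
    by_cases h01 : w01 = 0
    · by_cases h02 : w02 = 0
      · have h03 : w03 = 0 := by
          have : w03 ^ 2 = 0 := by simpa [h01, h02] using hquad
          exact pow_eq_zero_iff (two_ne_zero) |>.1 this
        subst h01 h02 h03
        by_cases h13 : w13 = 0
        · subst h13
          exact ⟨![0, 0, 1, 0], ![0, 0, 0, w23], by simp⟩
        · exact ⟨![0, 1, w23 / w13, 0], ![0, 0, 0, w13], by simp [h13]⟩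
      · refine ⟨![0, w01 / w02, 1, w03 / w02], ![w02, w03, 0, w23], ?_⟩
        simp only [Matrix.cons_val]
        refine ⟨?_, ?_, ?_, ?_, ?_, ?_⟩ <;> field_simp <;> grind
    · refine ⟨![0, 1, w02 / w01, w03 / w01], ![w01, 0, w03, w13], ?_⟩
      simp only [Matrix.cons_val]
      refine ⟨?_, ?_, ?_, ?_, ?_, ?_⟩ <;> field_simp <;> grind
  obtain ⟨u, v, e01, e02, e03, e12, e13, e23⟩ := core
  have hiso : u 0 * v 3 + u 1 * v 2 + u 2 * v 1 + u 3 * v 0 = 0 := by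
    linear_combination -e03 - e12 + w03 * h2
  refine ⟨u, v, ?_, e01, e02, e03, e12, e13, e23, ?_, hiso⟩
  · rw [LinearIndependent.pair_iff]
    intro s t hst
    have hc : ∀ i, s * u i + t * v i = 0 := fun i => by simpa using congrFun hst i
    have hs : ∀ i j, s * (u i * v j + u j * v i) = 0 := fun i j => by
      linear_combination v j * hc i + v i * hc j - t * v i * v j * h2
    have ht : ∀ i j, t * (u i * v j + u j * v i) = 0 := fun i j => by
      linear_combination u j * hc i + u i * hc j - s * u i * u j * h2
    have key : ∀ r : F, (∀ i j, r * (u i * v j + u j * v i) = 0) → r = 0 := by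
      intro r hr
      by_contra hr0
      have hz : ∀ i j, u i * v j + u j * v i = 0 := fun i j =>
        (mul_eq_zero.1 (hr i j)).resolve_left hr0
      exact hne ⟨e01.trans (hz _ _), e02.trans (hz _ _), e03.trans (hz _ _),
        e12.trans (hz _ _), e13.trans (hz _ _), e23.trans (hz _ _)⟩
    exact ⟨key s hs, key t ht⟩
  · intro x hx y hy
    obtain ⟨a, b, rfl⟩ := Submodule.mem_span_pair.1 hx
    obtain ⟨c, d, rfl⟩ := Submodule.mem_span_pair.1 hy
    simp only [Pi.add_apply, Pi.smul_apply, smul_eq_mul]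
    linear_combination (a * d + b * c) * hiso +
      (a * c * (u 0 * u 3 + u 1 * u 2) + b * d * (v 0 * v 3 + v 1 * v 2)) * h2
end

section
/- Let F be a field of characteristic 2 and p ∈ F⁴ a nonzero vector. Consider the set of all 2-dimensional subspaces of F⁴ that contain p and are totally isotropic for α, and for each such subspace ⟨p,v⟩ form the nucleus vector w(p,v) ∈ F⁶. Then the set of 1-dimensional subspaces {⟨w(p,v)⟩ : ⟨p,v⟩ totally isotropic, v ∉ ⟨p⟩} is exactly the set of all 1-dimensional subspaces of a single 2-dimensional subspace of F⁶; that is, the nuclei of the conics coming from the pencil of totally isotropic lines through ⟨p⟩ form the point set of a projective line. -/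
/-- The nucleus vector `w(u,v) ∈ F⁶`, with coordinates
`w_{01}, w_{02}, w_{03}, w_{12}, w_{13}, w_{23}` where `w_{ij} = u_i v_j + u_j v_i`. -/
def wvec (F : Type*) [Field F] (u v : Fin 4 → F) : Fin 6 → F :=
  ![u 0 * v 1 + u 1 * v 0, u 0 * v 2 + u 2 * v 0, u 0 * v 3 + u 3 * v 0,
    u 1 * v 2 + u 2 * v 1, u 1 * v 3 + u 3 * v 1, u 2 * v 3 + u 3 * v 2]

/-- `alphaForm` as a linear map in the second argument. -/
def alphaLin (F : Type*) [Field F] (p : Fin 4 → F) : (Fin 4 → F) →ₗ[F] F where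
  toFun := alphaForm F p
  map_add' x y := by simp only [alphaForm, Pi.add_apply]; ring
  map_smul' c x := by
    simp only [alphaForm, Pi.smul_apply, smul_eq_mul, RingHom.id_apply]; ring

/-- `wvec` as a linear map in the second argument. -/
def wLin (F : Type*) [Field F] (p : Fin 4 → F) : (Fin 4 → F) →ₗ[F] (Fin 6 → F) where
  toFun := wvec F p
  map_add' x y := by
    ext i
    fin_cases i <;> simp [wvec] <;> ring
  map_smul' c x := by
    ext i
    fin_cases i <;> simp [wvec] <;> ring

theorem wvec_eq_zero_iff (F : Type*) [Field F] [CharP F 2] (p : Fin 4 → F) (hp : p ≠ 0)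
    (v : Fin 4 → F) : wvec F p v = 0 ↔ v ∈ Submodule.span F {p} := by
  rw [Submodule.mem_span_singleton]
  constructor
  · intro h
    have h0 := congrFun h 0
    have h1 := congrFun h 1
    have h2 := congrFun h 2
    have h3 := congrFun h 3
    have h4 := congrFun h 4
    have h5 := congrFun h 5
    simp [wvec, CharTwo.add_eq_zero] at h0 h1 h2 h3 h4 h5
    have key : ∀ i j, p i * v j = p j * v i := by
      intro i j
      fin_cases i <;> fin_cases j <;> simp [*]
    obtain ⟨i, hi⟩ := Function.ne_iff.mp hp
    simp only [Pi.zero_apply] at hi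
    refine ⟨v i / p i, ?_⟩
    ext j
    simp only [Pi.smul_apply, smul_eq_mul]
    field_simp
    linear_combination -key i j
  · rintro ⟨a, rfl⟩
    ext i
    fin_cases i <;> simp [wvec, CharTwo.add_eq_zero] <;> ring

/-- for a field `F` of characteristic 2 and a nonzero `p ∈ F⁴`, the nuclei of the
conics coming from the pencil of totally isotropic lines through `⟨p⟩` form the point set of a
projective line: the set of `1`-dimensional subspaces `⟨w(p,v)⟩`, for `⟨p,v⟩` ranging over the
totally isotropic `2`-subspaces through `p`, is exactly the set of `1`-dimensional subspaces of
a single `2`-dimensional subspace `M` of `F⁶`. -/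
theorem statement5 (F : Type*) [Field F] [CharP F 2] (p : Fin 4 → F) (hp : p ≠ 0) :
    ∃ M : Submodule F (Fin 6 → F), Module.finrank F ↥M = 2 ∧
      {N : Submodule F (Fin 6 → F) | ∃ v : Fin 4 → F,
          alphaForm F p v = 0 ∧ v ∉ Submodule.span F {p} ∧
          N = Submodule.span F {wvec F p v}}
        = {N : Submodule F (Fin 6 → F) | ∃ x ∈ M, x ≠ 0 ∧ N = Submodule.span F {x}} := by
  have hW : ∀ v, wLin F p v = wvec F p v := fun _ => rfl
  have hA : ∀ v, alphaLin F p v = alphaForm F p v := fun _ => rfl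
  refine ⟨(LinearMap.ker (alphaLin F p)).map (wLin F p), ?_, ?_⟩
  · have hle : Submodule.span F {p} ≤ LinearMap.ker (alphaLin F p) := by
      rw [Submodule.span_singleton_le_iff_mem, LinearMap.mem_ker, hA]
      have h2 : (2 : F) = 0 := CharTwo.two_eq_zero
      simp only [alphaForm]
      linear_combination (p 0 * p 3 + p 1 * p 2) * h2
    have hsurj : Function.Surjective (alphaLin F p) := by
      apply LinearMap.surjective
      intro h0
      apply hp
      have e : ∀ i, alphaForm F p (Pi.single i 1) = 0 := fun i => by
        rw [← hA, h0]; rfl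
      ext i
      have e0 := e 0
      have e1 := e 1
      have e2 := e 2
      have e3 := e 3
      simp [alphaForm, Pi.single_apply] at e0 e1 e2 e3
      fin_cases i <;> simp [*]
    have r1 := LinearMap.finrank_range_add_finrank_ker (alphaLin F p)
    rw [LinearMap.range_eq_top.mpr hsurj] at r1
    have r2 := LinearMap.finrank_range_add_finrank_ker
      ((wLin F p).domRestrict (LinearMap.ker (alphaLin F p)))
    have hk : LinearMap.ker ((wLin F p).domRestrict (LinearMap.ker (alphaLin F p)))
        = (Submodule.span F {p}).comap (LinearMap.ker (alphaLin F p)).subtype := by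
      ext x
      rw [LinearMap.mem_ker, LinearMap.domRestrict_apply, hW, wvec_eq_zero_iff F p hp]
      rfl
    rw [hk, LinearMap.range_domRestrict,
      (Submodule.comapSubtypeEquivOfLe hle).finrank_eq, finrank_span_singleton hp] at r2
    simp at r1
    omega
  · ext N
    simp only [Set.mem_setOf_eq]
    constructor
    · rintro ⟨v, h1, h2, rfl⟩
      exact ⟨wvec F p v, ⟨v, h1, rfl⟩, fun h => h2 ((wvec_eq_zero_iff F p hp v).mp h), rfl⟩
    · rintro ⟨x, ⟨v, h1, rfl⟩, h2, rfl⟩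
      exact ⟨v, h1, fun h => h2 ((wvec_eq_zero_iff F p hp v).mpr h), rfl⟩
end

section
/- Let F be a field with more than 2 elements and d ≥ 1 an integer. Let Γ be the point-line geometry PG(d,F), whose points are the 1-dimensional subspaces of F^{d+1} and whose lines are the point sets of the 2-dimensional subspaces of F^{d+1}. Then the 3-generating rank of Γ equals (d+2 choose 2), i.e. grk₃(PG(d,F)) = (d+1)(d+2)/2. -/
open Cardinal

/-- `S` is a 3-subspace of the point-line geometry with line set `L`: every line having at
least three points in `S` is contained in `S`. -/
def Is3Subspace {P : Type*} (L : Set (Set P)) (S : Set P) : Prop :=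
  ∀ l ∈ L, (∃ x ∈ l ∩ S, ∃ y ∈ l ∩ S, ∃ z ∈ l ∩ S, x ≠ y ∧ x ≠ z ∧ y ≠ z) → l ⊆ S

/-- The 3-span of `X`: the smallest 3-subspace containing `X`. -/
def ThreeSpan {P : Type*} (L : Set (Set P)) (X : Set P) : Set P :=
  ⋂₀ {S | Is3Subspace L S ∧ X ⊆ S}

/-- `X` 3-generates the geometry when its 3-span is the whole point set. -/
def ThreeGenerates {P : Type*} (L : Set (Set P)) (X : Set P) : Prop :=
  ThreeSpan L X = Set.univ

/-- The 3-generating rank: the minimum cardinality of a 3-generating set. -/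
noncomputable def grk3 {P : Type*} (L : Set (Set P)) : Cardinal :=
  sInf {c : Cardinal | ∃ X : Set P, ThreeGenerates L X ∧ #↥X = c}

/-- The points of `PG(n-1,F)`: the 1-dimensional subspaces of `F^n`. -/
def PGPoint (F : Type*) [Field F] (n : ℕ) :=
  {W : Submodule F (Fin n → F) // Module.finrank F ↥W = 1}

/-- The lines of `PG(n-1,F)`: the point sets of the 2-dimensional subspaces of `F^n`. -/
def PGLines (F : Type*) [Field F] (n : ℕ) : Set (Set (PGPoint F n)) :=
  {S | ∃ W : Submodule F (Fin n → F), Module.finrank F ↥W = 2 ∧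
    S = {p : PGPoint F n | p.1 ≤ W}}

namespace PGAux

variable {F : Type*} [Field F] {n : ℕ}

/-- The projective point spanned by a nonzero vector. -/
def mkPt (v : Fin n → F) (hv : v ≠ 0) : PGPoint F n :=
  ⟨Submodule.span F {v}, finrank_span_singleton hv⟩

theorem pt_eq_span (x : PGPoint F n) {v : Fin n → F} (hv : v ≠ 0) (h : v ∈ x.1) :
    x.1 = Submodule.span F {v} := by
  symm
  have h1 := x.2
  haveI : FiniteDimensional F x.1 := inferInstance
  apply Submodule.eq_of_le_of_finrank_eq
  · simpa using h
  · rw [finrank_span_singleton hv, h1]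

theorem pt_exists (x : PGPoint F n) : ∃ v : Fin n → F, v ≠ 0 ∧ v ∈ x.1 := by
  obtain ⟨v, hv, -⟩ := finrank_eq_one_iff'.1 x.2
  exact ⟨v, by simpa using hv, v.2⟩

theorem pt_ext {x y : PGPoint F n} {v : Fin n → F} (hv : v ≠ 0) (h : v ∈ x.1) (h' : v ∈ y.1) :
    x = y := Subtype.ext ((pt_eq_span x hv h).trans (pt_eq_span y hv h').symm)

theorem line_span (W : Submodule F (Fin n → F)) (hW : Module.finrank F W = 2)
    {v w : Fin n → F} (hv : v ∈ W) (hw : w ∈ W) (hl : LinearIndependent F ![v, w])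
    {u : Fin n → F} (hu : u ∈ W) : ∃ a b : F, a • v + b • w = u := by
  have : Submodule.span F (Set.range ![v, w]) = W := by
    apply Submodule.eq_of_le_of_finrank_eq
    · rw [Submodule.span_le]
      rintro _ ⟨i, rfl⟩
      fin_cases i <;> simpa
    · rw [finrank_span_eq_card hl, hW]; simp
  rw [← this] at hu
  rw [show Set.range ![v, w] = {v, w} by simp [Set.pair_comm], Submodule.mem_span_pair] at hu
  exact hu

theorem indep_of_ne {x y : PGPoint F n} (hxy : x ≠ y) {v w : Fin n → F} (hv : v ≠ 0) (hw : w ≠ 0)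
    (hvx : v ∈ x.1) (hwy : w ∈ y.1) : LinearIndependent F ![v, w] := by
  rw [LinearIndependent.pair_iff' hv]
  intro a ha
  apply hxy
  exact pt_ext hw (ha ▸ x.1.smul_mem a hvx) hwy

/-- zero set of a quadratic form -/
def zeroSet (q : QuadraticForm F (Fin n → F)) : Set (PGPoint F n) := {p | ∀ v ∈ p.1, q v = 0}

theorem q_comb (q : QuadraticForm F (Fin n → F)) (a b : F) (v w : Fin n → F) :
    q (a • v + b • w) = a * a * q v + b * b * q w + a * b * QuadraticMap.polar q v w := by
  rw [QuadraticMap.map_add q, QuadraticMap.map_smul, QuadraticMap.map_smul,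
    QuadraticMap.polar_smul_left, QuadraticMap.polar_smul_right]
  simp only [smul_eq_mul]
  ring

theorem zeroSet_sub (q : QuadraticForm F (Fin n → F)) :
    Is3Subspace (PGLines F n) (zeroSet q) := by
  rintro l ⟨W, hW, rfl⟩ ⟨x, ⟨hxW, hx⟩, y, ⟨hyW, hy⟩, z, ⟨hzW, hz⟩, hxy, hxz, hyz⟩ p hp v hv
  obtain ⟨vx, hx0, hvx⟩ := pt_exists x
  obtain ⟨vy, hy0, hvy⟩ := pt_exists y
  obtain ⟨vz, hz0, hvz⟩ := pt_exists z
  have hl := indep_of_ne hxy hx0 hy0 hvx hvy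
  obtain ⟨a, b, hab⟩ := line_span W hW (hxW hvx) (hyW hvy) hl (hzW hvz)
  obtain ⟨c, d, hcd⟩ := line_span W hW (hxW hvx) (hyW hvy) hl (hp hv)
  have ha : a ≠ 0 := by
    rintro rfl
    apply hyz
    refine pt_ext hz0 ?_ hvz
    rw [← hab]; simpa using y.1.smul_mem b hvy
  have hb : b ≠ 0 := by
    rintro rfl
    apply hxz
    refine pt_ext hz0 ?_ hvz
    rw [← hab]; simpa using x.1.smul_mem a hvx
  have h1 := hz vz hvz
  rw [← hab, q_comb, hx vx hvx, hy vy hvy] at h1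
  have h2 : QuadraticMap.polar q vx vy = 0 := by simpa [ha, hb] using h1
  rw [← hcd, q_comb, hx vx hvx, hy vy hvy, h2]; simp

/-- The quadratic monomial attached to an unordered pair. -/
def mono2 (s : Sym2 (Fin n)) : QuadraticForm F (Fin n → F) :=
  Sym2.lift ⟨fun i j => QuadraticMap.linMulLin (LinearMap.proj i) (LinearMap.proj j), by
    intro i j; ext v; simp [mul_comm]⟩ s

@[simp] theorem mono2_mk (i j : Fin n) (v : Fin n → F) :
    mono2 (F := F) s(i, j) v = v i * v j := by
  simp [mono2]

/-- quadratic form with given coefficients -/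
def qf (c : Sym2 (Fin n) → F) : QuadraticForm F (Fin n → F) := ∑ s, c s • mono2 s

theorem qf_apply (c : Sym2 (Fin n) → F) (v : Fin n → F) : qf c v = ∑ s, c s * mono2 s v := by
  simp [qf]

theorem qf_inj (c : Sym2 (Fin n) → F) (h : ∀ v, qf c v = 0) : c = 0 := by
  have hd : ∀ i, c s(i, i) = 0 := by
    intro i
    have := h (Pi.single i 1)
    rw [qf_apply, Finset.sum_eq_single s(i, i)] at this
    · simpa using this
    · intro b _ hb
      induction b with | _ k l
      simp only [mono2_mk, Pi.single_apply]
      grind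
    · simp
  funext s
  induction s with | _ i j
  by_cases hij : i = j
  · subst hij; exact hd i
  have := h (Pi.single i 1 + Pi.single j 1)
  rw [qf_apply, Finset.sum_eq_single s(i, j)] at this
  · simpa [Pi.single_apply, hij, Ne.symm hij] using this
  · intro b _ hb
    induction b with | _ k l
    by_cases hkl : k = l
    · subst hkl; simp [hd]
    simp only [mono2_mk, Pi.single_apply, Pi.add_apply]
    grind
  · simp

theorem lower (X : Set (PGPoint F n)) (hX : ThreeGenerates (PGLines F n) X) :
    (((n + 1).choose 2 : ℕ) : Cardinal) ≤ #X := by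
  by_contra hlt
  rw [not_le] at hlt
  have hfin : Finite X := by
    rw [← Cardinal.lt_aleph0_iff_finite]
    exact hlt.trans (Cardinal.natCast_lt_aleph0)
  haveI := Fintype.ofFinite X
  rw [Cardinal.mk_fintype, Nat.cast_lt] at hlt
  choose r hr0 hr using fun x : PGPoint F n => pt_exists x
  let f : (Sym2 (Fin n) → F) →ₗ[F] (X → F) :=
    { toFun := fun c x => qf c (r x.1)
      map_add' := by
        intro c c'; funext x; simp [qf_apply, add_mul, Finset.sum_add_distrib]
      map_smul' := by
        intro c c'; funext x; simp [qf_apply, mul_assoc, Finset.mul_sum] }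
  have hk : LinearMap.ker f ≠ ⊥ := by
    apply LinearMap.ker_ne_bot_of_finrank_lt
    rw [Module.finrank_fintype_fun_eq_card, Module.finrank_fintype_fun_eq_card, Sym2.card]
    simpa using hlt
  obtain ⟨c, hc, hc0⟩ := Submodule.exists_mem_ne_zero_of_ne_bot hk
  apply hc0
  apply qf_inj
  intro v
  by_cases hv : v = 0
  · subst hv; simp
  have hsub : ThreeSpan (PGLines F n) X ⊆ zeroSet (qf c) := by
    apply Set.sInter_subset_of_mem
    refine ⟨zeroSet_sub _, ?_⟩
    intro x hx w hw
    have h1 : qf c (r x) = 0 := congrFun (LinearMap.mem_ker.1 hc) ⟨x, hx⟩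
    rw [pt_eq_span x (hr0 x) (hr x), Submodule.mem_span_singleton] at hw
    obtain ⟨a, rfl⟩ := hw
    rw [QuadraticMap.map_smul, h1]; simp
  rw [hX] at hsub
  exact hsub (Set.mem_univ (mkPt v hv)) v (Submodule.mem_span_singleton_self v)

/-- cone over a point set -/
def T (S : Set (PGPoint F n)) (v : Fin n → F) : Prop := ∀ x : PGPoint F n, v ≠ 0 → v ∈ x.1 → x ∈ S

theorem T_smul {S : Set (PGPoint F n)} {v : Fin n → F} (h : T S v) (a : F) : T S (a • v) := by
  intro x h0 hx
  have ha : a ≠ 0 := by rintro rfl; simp at h0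
  refine h x (by rintro rfl; simp at h0) ?_
  simpa [ha] using x.1.smul_mem a⁻¹ hx

theorem T_line {S : Set (PGPoint F n)} (hS : Is3Subspace (PGLines F n) S) {v w : Fin n → F}
    (hl : LinearIndependent F ![v, w]) (hv : T S v) (hw : T S w) (hd : T S (v - w))
    (a b : F) : T S (a • v + b • w) := by
  intro x h0 hx
  have hp := LinearIndependent.pair_iff.1 hl
  have hv0 : v ≠ 0 := hl.ne_zero 0
  have hw0 : w ≠ 0 := hl.ne_zero 1
  have hd0 : v - w ≠ 0 := by
    intro h
    have := hp 1 (-1) (by rw [← h]; module)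
    simp at this
  have hW : Module.finrank F (Submodule.span F (Set.range ![v, w])) = 2 := by
    rw [finrank_span_eq_card hl]; simp
  have hvW : v ∈ Submodule.span F (Set.range ![v, w]) := Submodule.subset_span ⟨0, rfl⟩
  have hwW : w ∈ Submodule.span F (Set.range ![v, w]) := Submodule.subset_span ⟨1, rfl⟩
  have key : ∀ (u : Fin n → F) (hu : u ≠ 0), u ∈ Submodule.span F (Set.range ![v, w]) →
      T S u → mkPt u hu ∈ {p : PGPoint F n | p.1 ≤ Submodule.span F (Set.range ![v, w])} ∩ S := by
    intro u hu huW hT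
    refine ⟨?_, hT _ hu (Submodule.mem_span_singleton_self u)⟩
    show Submodule.span F {u} ≤ _
    rw [Submodule.span_singleton_le_iff_mem]; exact huW
  have kne : ∀ (u u' : Fin n → F) (hu : u ≠ 0) (hu' : u' ≠ 0), (∀ a : F, a • u ≠ u') →
      mkPt u hu ≠ mkPt u' hu' := by
    intro u u' hu hu' hh heq
    have : u' ∈ (mkPt u hu).1 := heq ▸ Submodule.mem_span_singleton_self u'
    obtain ⟨a, ha⟩ := Submodule.mem_span_singleton.1 this
    exact hh a ha
  have := hS _ ⟨_, hW, rfl⟩ ⟨mkPt v hv0, key v hv0 hvW hv, mkPt w hw0, key w hw0 hwW hw,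
    mkPt (v - w) hd0, key _ hd0 (Submodule.sub_mem _ hvW hwW) hd, ?_, ?_, ?_⟩
  · apply this
    show x.1 ≤ _
    rw [pt_eq_span x h0 hx, Submodule.span_singleton_le_iff_mem]
    exact Submodule.add_mem _ (Submodule.smul_mem _ _ hvW) (Submodule.smul_mem _ _ hwW)
  · apply kne
    intro a ha
    have := hp a (-1) (by rw [ha]; module)
    simp at this
  · apply kne
    intro a ha
    have := hp (a - 1) 1 (by rw [sub_smul, ha]; module)
    simp at this
  · apply kne
    intro a ha
    have := hp 1 (-1 - a) (by rw [sub_smul, ha]; module)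
    simp at this

theorem T_extend (hF : ∃ t : F, t ≠ 0 ∧ t ≠ 1) {S : Set (PGPoint F n)}
    (hS : Is3Subspace (PGLines F n) S) (H : Submodule F (Fin n → F)) (hH : ∀ v ∈ H, T S v)
    (e : Fin n → F) (he : e ∉ H) (heT : T S e) (B : Set (Fin n → F)) (hB : H = Submodule.span F B)
    (hBT : ∀ b ∈ B, T S (e + b)) : ∀ v ∈ H, ∀ c : F, T S (v + c • e) := by
  have comb : ∀ v ∈ H, ∀ w ∈ H, T S (e + v) → T S (e + w) → ∀ t : F,
      T S (e + (t • v + (1 - t) • w)) := by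
    intro v hv w hw hTv hTw t
    by_cases hvw : v = w
    · subst hvw
      have : t • v + (1 - t) • v = v := by module
      rwa [this]
    have : e + (t • v + (1 - t) • w) = t • (e + v) + (1 - t) • (e + w) := by module
    rw [this]
    apply T_line hS _ hTv hTw
    · have : e + v - (e + w) = v - w := by module
      rw [this]
      exact hH _ (H.sub_mem hv hw)
    · rw [LinearIndependent.pair_iff]
      intro a b hab
      have h1 : (a + b) • e = -(a • v + b • w) := by
        rw [eq_neg_iff_add_eq_zero, ← hab]; module
      have h2 : a + b = 0 := by
        by_contra h
        apply he
        rw [← H.smul_mem_iff h, h1]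
        exact H.neg_mem (H.add_mem (H.smul_mem _ hv) (H.smul_mem _ hw))
      have h3 : b = -a := by linear_combination h2
      subst h3
      have h4 : a • (v - w) = 0 := by rw [← hab]; module
      rcases smul_eq_zero.1 h4 with h | h
      · simp [h]
      · exact absurd (sub_eq_zero.1 h) hvw
  have e0 : T S (e + 0) := by simpa using heT
  have sm : ∀ v ∈ H, T S (e + v) → ∀ t : F, T S (e + t • v) := by
    intro v hv hTv t
    simpa using comb v hv 0 H.zero_mem hTv e0 t
  have hall : ∀ v ∈ H, T S (e + v) := by
    let M : Submodule F (Fin n → F) :=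
      { carrier := {v | v ∈ H ∧ T S (e + v)}
        zero_mem' := ⟨H.zero_mem, e0⟩
        smul_mem' := fun c v hv => ⟨H.smul_mem c hv.1, sm v hv.1 hv.2 c⟩
        add_mem' := by
          rintro v w ⟨hv, hTv⟩ ⟨hw, hTw⟩
          refine ⟨H.add_mem hv hw, ?_⟩
          obtain ⟨t, ht0, ht1⟩ := hF
          have ht2 : 1 - t ≠ 0 := sub_ne_zero.2 (Ne.symm ht1)
          have := comb (t⁻¹ • v) (H.smul_mem _ hv) ((1 - t)⁻¹ • w) (H.smul_mem _ hw)
            (sm v hv hTv _) (sm w hw hTw _) t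
          rwa [smul_inv_smul₀ ht0, smul_inv_smul₀ ht2] at this }
    have hle : H ≤ M := by
      rw [hB, Submodule.span_le]
      intro b hb
      exact ⟨hB ▸ Submodule.subset_span hb, hBT b hb⟩
    intro v hv
    exact (hle hv).2
  intro v hv c
  by_cases hc : c = 0
  · subst hc; simpa using hH v hv
  have : v + c • e = c • (e + c⁻¹ • v) := by
    rw [smul_add, smul_inv_smul₀ hc, add_comm]
  rw [this]
  exact T_smul (hall _ (H.smul_mem _ hv)) _

/-- the generating vectors -/
def gen (i j : Fin n) : Fin n → F := if i = j then Pi.single i 1 else Pi.single i 1 + Pi.single j 1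

theorem T_all (hF : ∃ t : F, t ≠ 0 ∧ t ≠ 1) {S : Set (PGPoint F n)}
    (hS : Is3Subspace (PGLines F n) S) (hg : ∀ i j, T S (gen i j)) (k : ℕ) (hk : k ≤ n) :
    ∀ v ∈ Submodule.span F {b : Fin n → F | ∃ i : Fin n, i.val < k ∧ b = Pi.single i 1},
      T S v := by
  induction k with
  | zero =>
    intro v hv x h0
    simp at hv
    exact absurd hv h0
  | succ k ih =>
    have hset : {b : Fin n → F | ∃ i : Fin n, i.val < k + 1 ∧ b = Pi.single i 1} =
        insert (Pi.single ⟨k, hk⟩ 1) {b : Fin n → F | ∃ i : Fin n, i.val < k ∧ b = Pi.single i 1} := by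
      ext b
      simp only [Set.mem_ofPred_eq, Set.mem_insert_iff]
      constructor
      · rintro ⟨i, hi, rfl⟩
        rcases Nat.lt_succ_iff_lt_or_eq.1 hi with h | h
        · exact Or.inr ⟨i, h, rfl⟩
        · left; congr; exact Fin.ext h
      · rintro (rfl | ⟨i, hi, rfl⟩)
        · exact ⟨_, Nat.lt_succ_self k, rfl⟩
        · exact ⟨i, by omega, rfl⟩
    rw [hset]
    intro v hv
    rw [Submodule.mem_span_insert] at hv
    obtain ⟨a, z, hz, rfl⟩ := hv
    rw [add_comm]
    refine T_extend hF hS _ (ih (by omega)) _ ?_ ?_ _ rfl ?_ z hz a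
    · intro hmem
      have hle : Submodule.span F {b : Fin n → F | ∃ i : Fin n, i.val < k ∧ b = Pi.single i 1} ≤
          LinearMap.ker (LinearMap.proj (R := F) (φ := fun _ : Fin n => F) ⟨k, hk⟩) := by
        rw [Submodule.span_le]
        rintro _ ⟨i, hi, rfl⟩
        have : (⟨k, hk⟩ : Fin n) ≠ i := by rintro rfl; simp at hi
        simp [this]
      have := hle hmem
      simp at this
    · have := hg ⟨k, hk⟩ ⟨k, hk⟩
      simpa [gen] using this
    · rintro _ ⟨i, hi, rfl⟩
      have h1 : (⟨k, hk⟩ : Fin n) ≠ i := by rintro rfl; simp at hi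
      have := hg ⟨k, hk⟩ i
      simpa [gen, h1] using this

theorem gen_ne (i j : Fin n) : gen (F := F) i j ≠ 0 := by
  intro h
  have := congrFun h i
  unfold gen at this
  split_ifs at this with hij
  · simp at this
  · simp [Pi.single_apply, hij] at this

/-- the generating points -/
def gp (s : Sym2 (Fin n)) : PGPoint F n :=
  Sym2.lift ⟨fun i j => mkPt (gen i j) (gen_ne i j), by
    intro i j
    have : gen (F := F) i j = gen j i := by
      unfold gen
      by_cases h : i = j
      · subst h; rfl
      · rw [if_neg h, if_neg (Ne.symm h), add_comm]
    simp [this]⟩ s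

theorem upper (hF : ∃ t : F, t ≠ 0 ∧ t ≠ 1) :
    ThreeGenerates (PGLines F n) (Set.range (gp (F := F) (n := n))) := by
  rw [ThreeGenerates, Set.eq_univ_iff_forall]
  rintro x S ⟨hS, hXS⟩
  obtain ⟨v, hv0, hv⟩ := pt_exists x
  refine T_all hF hS ?_ n le_rfl v ?_ x hv0 hv
  · intro i j y _ hy
    have h1 : gp s(i, j) ∈ S := hXS ⟨_, rfl⟩
    have h2 : y = gp s(i, j) := pt_ext (gen_ne i j) hy (Submodule.mem_span_singleton_self _)
    rwa [h2]
  · rw [pi_eq_sum_univ' v]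
    refine Submodule.sum_mem _ fun i _ => Submodule.smul_mem _ _ (Submodule.subset_span ⟨i, i.2, ?_⟩)
    funext j
    simp [Pi.single_apply, eq_comm]

end PGAux

/-- for a field `F` with more than two elements and `d ≥ 1`, the 3-generating
rank of the projective space `PG(d,F)` equals `(d+2 choose 2) = (d+1)(d+2)/2`. -/
theorem statement7 (F : Type*) [Field F] (hF : 2 < #F) (d : ℕ) (hd : 1 ≤ d) :
    grk3 (PGLines F (d + 1)) = ((d + 2).choose 2 : ℕ) := by
  have hF' : ∃ t : F, t ≠ 0 ∧ t ≠ 1 := by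
    by_contra! h
    have huniv : (Set.univ : Set F) = {0, 1} := by
      ext t
      by_cases ht : t = 0
      · simp [ht]
      · simp [h t ht]
    have h2 : #F ≤ 2 := by
      rw [← Cardinal.mk_univ, huniv]
      exact Cardinal.mk_insert_le.trans (by rw [Cardinal.mk_singleton, one_add_one_eq_two])
    exact absurd hF (not_lt.2 h2)
  have hgen := PGAux.upper (n := d + 1) hF'
  have hmem : #(Set.range (PGAux.gp (F := F) (n := d + 1))) ∈ {c : Cardinal |
      ∃ X : Set (PGPoint F (d + 1)), ThreeGenerates (PGLines F (d + 1)) X ∧ #↥X = c} :=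
    ⟨_, hgen, rfl⟩
  apply le_antisymm
  · refine (csInf_le' hmem).trans ?_
    have h := Cardinal.mk_range_le_lift (f := PGAux.gp (F := F) (n := d + 1))
    rw [Cardinal.mk_fintype (Sym2 (Fin (d + 1))), Sym2.card] at h
    simpa using h
  · refine le_csInf ⟨_, hmem⟩ ?_
    rintro _ ⟨X, hX, rfl⟩
    exact PGAux.lower X hX
end

section
/- Let F be a field with more than 2 elements and d ≥ 1. Then the veronesean embedding ν_{d+1} of PG(d,F) in PG(F^{(d+2 choose 2)}) induced by the quadric veronesean map is relatively universal; that is, every morphism to ν_{d+1} from any veronesean embedding of PG(d,F) is injective. -/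
open Cardinal

universe u v

/-- The quadric veronesean map `ν_n : F^n → F^{(n+1 choose 2)}`, `x ↦ (x_i x_j)_{i ≤ j}`,
with coordinates indexed by unordered pairs from `Fin n`. -/
def nuVer (F : Type*) [Field F] (n : ℕ) (x : Fin n → F) : Sym2 (Fin n) → F :=
  Sym2.lift ⟨fun i j => x i * x j, fun _ _ => mul_comm _ _⟩

/-- The veronesean embedding of `PG(n-1,F)` induced by the quadric veronesean map:
`⟨x⟩ ↦ ⟨ν_n(x)⟩`. -/
def epsNu (F : Type*) [Field F] (n : ℕ) (p : PGPoint F n) : Submodule F (Sym2 (Fin n) → F) :=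
  Submodule.span F (nuVer F n '' (p.1 : Set (Fin n → F)))

theorem aux_pair {F : Type*} [Field F] {n : ℕ} (hn : 2 ≤ n) (x y : Fin n → F) :
    ∃ u v : Fin n → F, LinearIndependent F ![u, v] ∧ x ∈ Submodule.span F {u, v} ∧
      y ∈ Submodule.span F {u, v} := by
  by_cases h : LinearIndependent F ![x, y]
  · exact ⟨x, y, h, Submodule.subset_span (by simp), Submodule.subset_span (by simp)⟩
  have key : ∃ z : Fin n → F, z ≠ 0 ∧ (∃ a : F, x = a • z) ∧ ∃ b : F, y = b • z := by
    by_cases hx : x = 0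
    · by_cases hy : y = 0
      · refine ⟨Pi.single ⟨0, by omega⟩ 1, by simp, ⟨0, by simp [hx]⟩, ⟨0, by simp [hy]⟩⟩
      · exact ⟨y, hy, ⟨0, by simp [hx]⟩, ⟨1, by simp⟩⟩
    · rw [LinearIndependent.pair_iff' hx] at h
      push Not at h
      obtain ⟨a, ha⟩ := h
      exact ⟨x, hx, ⟨1, by simp⟩, ⟨a, ha.symm⟩⟩
  obtain ⟨z, hz, ⟨a, rfl⟩, ⟨b, rfl⟩⟩ := key
  obtain ⟨w, hw⟩ := exists_linearIndependent_pair_of_one_lt_finrank (R := F)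
    (by simp; omega) hz
  exact ⟨z, w, hw, Submodule.smul_mem _ _ (Submodule.subset_span (by simp)),
    Submodule.smul_mem _ _ (Submodule.subset_span (by simp))⟩

theorem aux_nu_mk (F : Type*) [Field F] (n : ℕ) (x : Fin n → F) (i j : Fin n) :
    nuVer F n x s(i, j) = x i * x j := rfl

theorem aux_nu_indep {F : Type*} [Field F] {n : ℕ} (x y : Fin n → F)
    (h : LinearIndependent F ![x, y]) (a b c : F)
    (H : a • nuVer F n x + b • nuVer F n y + c • nuVer F n (x + y) = 0) :
    a = 0 ∧ b = 0 ∧ c = 0 := by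
  rw [LinearIndependent.pair_iff] at h
  have h1 : ∀ i, (a + c) * x i + c * y i = 0 ∧ (b + c) * y i + c * x i = 0 := by
    intro i
    apply h
    funext j
    have := congrFun H s(i, j)
    simp only [Pi.add_apply, Pi.smul_apply, aux_nu_mk, smul_eq_mul, Pi.zero_apply] at this ⊢
    linear_combination this
  have h2 := h (a + c) c (by funext i; simpa using (h1 i).1)
  have h3 := h c (b + c) (by funext i; have := (h1 i).2; simp; linear_combination this)
  obtain ⟨h4, rfl⟩ := h2
  simp at h4 h3
  exact ⟨h4, h3, rfl⟩

/-- A map which is quadratic on planes is quadratic. -/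
theorem aux_main {F : Type*} [Field F] {n : ℕ} (a₀ : F) (ha0 : a₀ ≠ 0) (ha1 : a₀ ≠ 1)
    {V' : Type*} [AddCommGroup V'] [Module F V'] (σ : F →+* F) (hσ : Function.Bijective σ)
    (f : V' →ₛₗ[σ] (Sym2 (Fin n) → F)) (e : (Fin n → F) → V')
    (hfe : ∀ x, f (e x) = nuVer F n x)
    (hinj : ∀ x y, ∃ W : Submodule F (Fin n → F), x ∈ W ∧ y ∈ W ∧
      ∀ v ∈ Submodule.span F (e '' W), f v = 0 → v = 0)
    (hspan : Submodule.span F (Set.range e) = ⊤) : Function.Injective f := by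
  have he : ∀ (a : F) x, e (σ a • x) = a ^ 2 • e x := by
    intro a x
    obtain ⟨W, hx, -, hW⟩ := hinj x x
    refine sub_eq_zero.1 (hW _ ?_ ?_)
    · exact Submodule.sub_mem _ (Submodule.subset_span ⟨_, W.smul_mem _ hx, rfl⟩)
        (Submodule.smul_mem _ _ (Submodule.subset_span ⟨_, hx, rfl⟩))
    · rw [map_sub, LinearMap.map_smulₛₗ, hfe, hfe]
      funext s
      induction s using Sym2.ind with | _ i j =>
      simp only [Pi.sub_apply, Pi.smul_apply, aux_nu_mk, smul_eq_mul, Pi.zero_apply, map_pow]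
      ring
  let B : (Fin n → F) → (Fin n → F) → V' := fun x y => e (x + y) - e x - e y
  have hB : ∀ (a : F) x y, B (σ a • x) y = a • B x y := by
    intro a x y
    obtain ⟨W, hx, hy, hW⟩ := hinj x y
    have hm : ∀ z ∈ W, e z ∈ Submodule.span F (e '' W) := fun z hz =>
      Submodule.subset_span ⟨_, hz, rfl⟩
    have hBm : ∀ z ∈ W, ∀ w ∈ W, B z w ∈ Submodule.span F (e '' W) := fun z hz w hw =>
      Submodule.sub_mem _ (Submodule.sub_mem _ (hm _ (W.add_mem hz hw)) (hm _ hz)) (hm _ hw)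
    refine sub_eq_zero.1 (hW _ ?_ ?_)
    · exact Submodule.sub_mem _ (hBm _ (W.smul_mem _ hx) _ hy)
        (Submodule.smul_mem _ _ (hBm _ hx _ hy))
    · simp only [B]
      rw [map_sub, LinearMap.map_smulₛₗ]
      simp only [map_sub, hfe]
      funext s
      induction s using Sym2.ind with | _ i j =>
      simp only [Pi.sub_apply, Pi.add_apply, Pi.smul_apply, aux_nu_mk, smul_eq_mul,
        Pi.zero_apply]
      ring
  have hBs : ∀ x y, B x y = B y x := by
    intro x y; simp only [B]; rw [add_comm x y]; abel
  let D : (Fin n → F) → (Fin n → F) → (Fin n → F) → V' :=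
    fun x y z => B x (y + z) - B x y - B x z
  have hD1 : ∀ (a : F) x y z, D (σ a • x) y z = a • D x y z := by
    intro a x y z
    simp only [D, hB, smul_sub]
  have hDs : ∀ x y z, D x y z = D y x z := by
    intro x y z
    simp only [D, B]
    rw [show y + (x + z) = x + (y + z) by abel, add_comm y x]
    abel
  have hDs' : ∀ x y z, D x y z = D z y x := by
    intro x y z
    simp only [D, B]
    rw [show z + (y + x) = x + (y + z) by abel, add_comm z y, add_comm z x, add_comm y x]
    abel
  have hD3 : ∀ (a : F) x y z, D (σ a • x) (σ a • y) (σ a • z) = a • a • a • D x y z := by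
    intro a x y z
    rw [hD1, hDs, hD1, hDs', hD1, hDs', hDs]
  have hD2 : ∀ (a : F) x y z, D (σ a • x) (σ a • y) (σ a • z) = a ^ 2 • D x y z := by
    intro a x y z
    simp only [D, B, ← smul_add, he, smul_sub]
  have hD : ∀ x y z, D x y z = 0 := by
    intro x y z
    have h := (hD3 a₀ x y z).symm.trans (hD2 a₀ x y z)
    rw [smul_smul, smul_smul, ← sub_eq_zero, ← sub_smul, smul_eq_zero] at h
    refine h.resolve_left ?_
    have : a₀ * a₀ * a₀ - a₀ ^ 2 = a₀ ^ 2 * (a₀ - 1) := by ring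
    simp only [this]
    exact mul_ne_zero (pow_ne_zero _ ha0) (sub_ne_zero.2 ha1)
  have hBadd : ∀ x y z, B x (y + z) = B x y + B x z := by
    intro x y z
    have := hD x y z
    simp only [D] at this
    rw [sub_sub, sub_eq_zero] at this
    exact this
  classical
  let E : Fin n → (Fin n → F) := fun i => Pi.single i 1
  let u : Sym2 (Fin n) → V' := Sym2.lift ⟨fun i j => if i = j then e (E i) else B (E i) (E j), by
    intro i j
    by_cases h : i = j
    · subst h; rfl
    · simp only [h, Ne.symm h, if_false]; exact hBs _ _⟩
  have hu : ∀ i j, u s(i, j) = if i = j then e (E i) else B (E i) (E j) := fun i j => rfl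
  have hfu : ∀ s, f (u s) = Pi.single s 1 := by
    intro s
    induction s using Sym2.ind with | _ i j =>
    rw [hu]
    funext t
    induction t using Sym2.ind with | _ k l =>
    split_ifs with h
    · subst h
      rw [hfe, aux_nu_mk]
      simp only [E, Pi.single_apply, Sym2.eq_iff]
      grind
    · simp only [B, map_sub, hfe, Pi.sub_apply, aux_nu_mk, Pi.add_apply]
      simp only [E, Pi.single_apply, Sym2.eq_iff]
      grind
  set U := Submodule.span F (Set.range u) with hU
  have huU : ∀ s, u s ∈ U := fun s => Submodule.subset_span ⟨s, rfl⟩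
  have heE : ∀ i, e (E i) ∈ U := fun i => by
    have := huU s(i, i); rwa [hu, if_pos rfl] at this
  have he0 : e 0 = 0 := by simpa using he 0 0
  have hBE : ∀ i j, B (E i) (E j) ∈ U := by
    intro i j
    by_cases h : i = j
    · subst h
      refine Submodule.sub_mem _ (Submodule.sub_mem _ ?_ (heE i)) (heE i)
      have := he 2 (E i)
      rw [map_ofNat, two_smul] at this
      rw [this]
      exact U.smul_mem _ (heE i)
    · have := huU s(i, j); rwa [hu, if_neg h] at this
  have hdecomp : ∀ x : Fin n → F, x = ∑ i, x i • E i := by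
    intro x
    exact pi_eq_sum_univ' x |>.trans (by
      refine Finset.sum_congr rfl fun i _ => ?_
      congr 1
      )
  have hB0 : ∀ x, B x 0 = 0 := by intro x; simp [B, he0]
  have hBsm : ∀ (x : Fin n → F), (∀ j, B x (E j) ∈ U) → ∀ y, B x y ∈ U := by
    intro x hx y
    rw [hdecomp y]
    refine Finset.sum_induction _ (fun z => B x z ∈ U) ?_ ?_ ?_
    · intro p q hp hq; rw [hBadd]; exact U.add_mem hp hq
    · simp only [hB0]; exact U.zero_mem
    · intro i _
      obtain ⟨b, hb⟩ := hσ.2 (y i)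
      rw [← hb, hBs, hB, hBs]
      exact U.smul_mem _ (hx i)
  have hBU : ∀ x y, B x y ∈ U := by
    intro x y
    apply hBsm
    intro j
    rw [hBs]
    exact hBsm _ (fun i => hBE _ _) _
  have heU : ∀ x, e x ∈ U := by
    intro x
    rw [hdecomp x]
    refine Finset.sum_induction _ (fun z => e z ∈ U) ?_ ?_ ?_
    · intro p q hp hq
      have : e (p + q) = B p q + e p + e q := by simp only [B]; abel
      rw [this]
      exact U.add_mem (U.add_mem (hBU _ _) hp) hq
    · simp only [he0]; exact U.zero_mem
    · intro i _
      obtain ⟨b, hb⟩ := hσ.2 (x i)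
      rw [← hb, he]
      exact U.smul_mem _ (heE i)
  have hUtop : U = ⊤ := by
    rw [eq_top_iff, ← hspan, Submodule.span_le]
    rintro _ ⟨x, rfl⟩
    exact heU x
  rw [injective_iff_map_eq_zero]
  intro v hv
  have hvU : v ∈ U := hUtop ▸ Submodule.mem_top
  obtain ⟨c, rfl⟩ := (Submodule.mem_span_range_iff_exists_fun F).1 hvU
  refine Finset.sum_eq_zero fun s _ => ?_
  have := congrFun hv s
  simp only [map_sum, LinearMap.map_smulₛₗ, hfu, Finset.sum_apply, Pi.smul_apply,
    Pi.single_apply, smul_eq_mul, mul_ite, mul_one, mul_zero, Finset.sum_ite_eq,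
    Finset.mem_univ, if_true, Pi.zero_apply] at this
  rw [(map_eq_zero σ).1 this, zero_smul]

/-- Let `F` be a field with more than 2 elements and `d ≥ 1`.  The veronesean
embedding `ν_{d+1}` of `PG(d,F)` in `PG(F^{(d+2 choose 2)})` induced by the quadric
veronesean map is relatively universal: every morphism to it from any veronesean embedding
of `PG(d,F)` is injective. -/
theorem statement8 (F : Type) [Field F] (hF : 2 < #F) (d : ℕ) (hd : 1 ≤ d) :
    RelUniversal.{u} F (PGPoint F (d + 1)) (PGLines F (d + 1))
      (Sym2 (Fin (d + 1)) → F) (epsNu F (d + 1)) := by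
  intro V' _ _ ε' σ hσ f hf hfp
  have hpt : ∀ x : Fin (d + 1) → F, x ≠ 0 →
      Module.finrank F ↥(Submodule.span F {x}) = 1 := fun x hx => finrank_span_singleton hx
  have huniq : ∀ (p : PGPoint F (d + 1)) (x : Fin (d + 1) → F), x ≠ 0 → x ∈ p.1 →
      p.1 = Submodule.span F {x} := by
    intro p x hx hxp
    have : FiniteDimensional F p.1 := Module.finite_of_finrank_eq_succ p.2
    symm
    apply Submodule.eq_of_le_of_finrank_eq
    · rw [Submodule.span_singleton_le_iff_mem]; exact hxp
    · rw [hpt x hx, p.2]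
  have hex : ∀ x : Fin (d + 1) → F, ∃ v : V', f v = nuVer F (d + 1) x ∧
      ∀ p : PGPoint F (d + 1), x ∈ p.1 → v ∈ ε'.toFun p := by
    intro x
    by_cases hx : x = 0
    · refine ⟨0, ?_, fun p _ => Submodule.zero_mem _⟩
      rw [map_zero, hx]
      funext s
      induction s using Sym2.ind with | _ i j => simp [aux_nu_mk]
    · have hm : nuVer F (d + 1) x ∈
          (epsNu F (d + 1) ⟨Submodule.span F {x}, hpt x hx⟩ : Set (Sym2 (Fin (d + 1)) → F)) :=
        Submodule.subset_span ⟨x, Submodule.mem_span_singleton_self x, rfl⟩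
      obtain ⟨v, hv, hfv⟩ := (hfp ⟨Submodule.span F {x}, hpt x hx⟩).symm.subset hm
      refine ⟨v, hfv, fun p hp => ?_⟩
      have : p = ⟨Submodule.span F {x}, hpt x hx⟩ := Subtype.ext (huniq p x hx hp)
      rw [this]; exact hv
  choose e hfe hep using hex
  obtain ⟨a₀, ha0, ha1⟩ := Cardinal.exists_ne_ne_of_three_le (α := F)
    (by
      have := Order.succ_le_of_lt hF
      rw [← Nat.cast_ofNat (R := Cardinal), ← Cardinal.nat_succ] at this
      exact_mod_cast this) 0 1
  refine aux_main a₀ ha0 ha1 σ hσ f e hfe ?_ ?_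
  · intro x y
    obtain ⟨z, w, hzw, hx, hy⟩ := aux_pair (by omega) x y
    refine ⟨Submodule.span F {z, w}, hx, hy, ?_⟩
    have hfr : Module.finrank F ↥(Submodule.span F {z, w}) = 2 := by
      have := finrank_span_eq_card hzw
      rw [show Set.range ![z, w] = {z, w} by simp [Matrix.range_cons, Set.pair_comm]] at this
      simpa using this
    obtain ⟨φ, hφ, hC⟩ := ε'.conic {p | p.1 ≤ Submodule.span F {z, w}} ⟨_, hfr, rfl⟩
    have hR : ∀ t ∈ Submodule.span F {z, w}, e t ∈ LinearMap.range φ := by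
      intro t ht
      by_cases ht0 : t = 0
      · have h1 : ∀ p : PGPoint F (d + 1), e t ∈ ε'.toFun p := fun p =>
          hep t p (ht0 ▸ Submodule.zero_mem _)
        have hz : z ≠ 0 := by simpa using hzw.ne_zero 0
        have h2 : ε'.toFun ⟨Submodule.span F {z}, hpt z hz⟩ ∈
            ε'.toFun '' {p | p.1 ≤ Submodule.span F {z, w}} :=
          ⟨_, Submodule.span_mono (by simp), rfl⟩
        rw [hC] at h2
        obtain ⟨s, r, -, h3⟩ := h2
        have h4 := h1 ⟨Submodule.span F {z}, hpt z hz⟩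
        rw [h3] at h4
        refine (Submodule.span_singleton_le_iff_mem _ _).2 ?_ h4
        exact ⟨_, rfl⟩
      · have h2 : ε'.toFun ⟨Submodule.span F {t}, hpt t ht0⟩ ∈
            ε'.toFun '' {p | p.1 ≤ Submodule.span F {z, w}} :=
          ⟨_, (Submodule.span_singleton_le_iff_mem _ _).2 ht, rfl⟩
        rw [hC] at h2
        obtain ⟨s, r, -, h3⟩ := h2
        have h4 := hep t ⟨Submodule.span F {t}, hpt t ht0⟩ (Submodule.mem_span_singleton_self t)
        rw [h3] at h4
        refine (Submodule.span_singleton_le_iff_mem _ _).2 ?_ h4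
        exact ⟨_, rfl⟩
    have hzW : z ∈ Submodule.span F {z, w} := Submodule.subset_span (by simp)
    have hwW : w ∈ Submodule.span F {z, w} := Submodule.subset_span (by simp)
    have hker : ∀ c : Fin 3 → F, f (∑ i, c i • ![e z, e w, e (z + w)] i) = 0 → c = 0 := by
      intro c hc
      simp only [Fin.sum_univ_three, map_add, LinearMap.map_smulₛₗ] at hc
      simp only [Matrix.cons_val, hfe] at hc
      obtain ⟨h1, h2, h3⟩ := aux_nu_indep z w hzw _ _ _ hc
      rw [map_eq_zero] at h1 h2 h3
      funext i
      fin_cases i <;> assumption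
    have hLI : LinearIndependent F ![e z, e w, e (z + w)] := by
      rw [Fintype.linearIndependent_iff]
      intro c hc i
      rw [hker c (by rw [hc, map_zero])]; rfl
    have hle : Submodule.span F (Set.range ![e z, e w, e (z + w)]) ≤ LinearMap.range φ := by
      rw [Submodule.span_le]
      rintro _ ⟨i, rfl⟩
      fin_cases i
      · exact hR _ hzW
      · exact hR _ hwW
      · exact hR _ (Submodule.add_mem _ hzW hwW)
    have heq : Submodule.span F (Set.range ![e z, e w, e (z + w)]) = LinearMap.range φ := by
      apply Submodule.eq_of_le_of_finrank_eq hle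
      rw [finrank_span_eq_card hLI, LinearMap.finrank_range_of_inj hφ]
      simp
    intro v hv hfv
    have hv2 : v ∈ LinearMap.range φ := by
      refine (Submodule.span_le.2 ?_) hv
      rintro _ ⟨t, ht, rfl⟩
      exact hR t ht
    rw [← heq] at hv2
    obtain ⟨c, rfl⟩ := (Submodule.mem_span_range_iff_exists_fun F).1 hv2
    rw [hker c hfv]
    simp
  · rw [eq_top_iff, ← ε'.spans]
    refine iSup_le fun p => ?_
    obtain ⟨g, hg, hpg⟩ := ε'.point p
    have hpb : p.1 ≠ ⊥ := by
      intro h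
      have := p.2
      rw [h, finrank_bot] at this
      exact zero_ne_one this
    obtain ⟨x, hxp, hx⟩ := Submodule.exists_mem_ne_zero_of_ne_bot hpb
    have h1 := hep x p hxp
    rw [hpg, Submodule.mem_span_singleton] at h1
    obtain ⟨a, ha⟩ := h1
    have ha' : a ≠ 0 := by
      rintro rfl
      rw [zero_smul] at ha
      have h2 := hfe x
      rw [← ha, map_zero] at h2
      apply hx
      funext i
      have h3 := congrFun h2 s(i, i)
      rw [aux_nu_mk] at h3
      simpa using h3.symm
    rw [hpg, Submodule.span_singleton_le_iff_mem]
    have : g = a⁻¹ • e x := by rw [← ha, smul_smul, inv_mul_cancel₀ ha', one_smul]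
    rw [this]
    exact Submodule.smul_mem _ _ (Submodule.subset_span ⟨x, rfl⟩)
end

section
/- Let Γ = (P, L) be a point-line geometry, let ε be a veronesean embedding of Γ in PG(V), and let S ⊆ P be a set that 3-generates Γ. Then the points {ε(p) : p ∈ S} span V; in particular dim V ≤ |S|, so the dimension of every veronesean embedding of Γ is at most the 3-generating rank grk₃(Γ). -/
open Cardinal

universe u v

/-- Two parameter pairs with vanishing determinant give the same point of the conic. -/
lemma conic_same {F : Type*} [Field F] {V : Type*} [AddCommGroup V] [Module F V]
    (φ : (Fin 3 → F) →ₗ[F] V) {s t s' t' : F} (h : ¬(s = 0 ∧ t = 0)) (h' : ¬(s' = 0 ∧ t' = 0))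
    (hd : s * t' - s' * t = 0) :
    Submodule.span F {φ ![s ^ 2, s * t, t ^ 2]} =
      Submodule.span F {φ ![s' ^ 2, s' * t', t' ^ 2]} := by
  obtain ⟨c, hc, h1, h2⟩ : ∃ c : F, c ≠ 0 ∧ s = c * s' ∧ t = c * t' := by
    by_cases hs' : s' = 0
    · have ht' : t' ≠ 0 := fun e => h' ⟨hs', e⟩
      have hs : s = 0 := by
        have : s * t' = 0 := by rw [hs'] at hd; linear_combination hd
        exact (mul_eq_zero.mp this).resolve_right ht'
      have ht : t ≠ 0 := fun e => h ⟨hs, e⟩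
      exact ⟨t / t', div_ne_zero ht ht', by simp [hs, hs'], by field_simp⟩
    · have hs : s ≠ 0 := by
        intro e
        have : s' * t = 0 := by rw [e] at hd; linear_combination -hd
        exact h ⟨e, (mul_eq_zero.mp this).resolve_left hs'⟩
      refine ⟨s / s', div_ne_zero hs hs', by field_simp, ?_⟩
      field_simp
      linear_combination -hd
  have e : φ ![s ^ 2, s * t, t ^ 2] = (c ^ 2) • φ ![s' ^ 2, s' * t', t' ^ 2] := by
    rw [← map_smul]
    congr 1
    ext i
    fin_cases i <;> simp [h1, h2] <;> ring
  rw [e]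
  exact Submodule.span_singleton_smul_eq (IsUnit.mk0 _ (pow_ne_zero 2 hc)) _

/-- Three distinct points of a conic span every point of the conic. -/
lemma conic_span {F : Type*} [Field F] {V : Type*} [AddCommGroup V] [Module F V]
    {C : Set (Submodule F V)} (hC : IsConic F C) {W a b c x : Submodule F V}
    (ha : a ∈ C) (hb : b ∈ C) (hc : c ∈ C) (hx : x ∈ C)
    (hab : a ≠ b) (hac : a ≠ c) (hbc : b ≠ c)
    (haW : a ≤ W) (hbW : b ≤ W) (hcW : c ≤ W) : x ≤ W := by
  obtain ⟨φ, -, rfl⟩ := hC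
  obtain ⟨s1, t1, h1, rfl⟩ := ha
  obtain ⟨s2, t2, h2, rfl⟩ := hb
  obtain ⟨s3, t3, h3, rfl⟩ := hc
  obtain ⟨s, t, h, rfl⟩ := hx
  have d12 : s1 * t2 - s2 * t1 ≠ 0 := fun e => hab (conic_same φ h1 h2 e)
  have d13 : s1 * t3 - s3 * t1 ≠ 0 := fun e => hac (conic_same φ h1 h3 e)
  have d23 : s2 * t3 - s3 * t2 ≠ 0 := fun e => hbc (conic_same φ h2 h3 e)
  rw [Submodule.span_singleton_le_iff_mem] at *
  have key : ((s1 * t2 - s2 * t1) * (s1 * t3 - s3 * t1) * (s2 * t3 - s3 * t2)) •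
        φ ![s ^ 2, s * t, t ^ 2] =
      ((s2 * t - s * t2) * (s3 * t - s * t3) * (s2 * t3 - s3 * t2)) •
        φ ![s1 ^ 2, s1 * t1, t1 ^ 2] +
      (-((s1 * t - s * t1) * (s3 * t - s * t3) * (s1 * t3 - s3 * t1))) •
        φ ![s2 ^ 2, s2 * t2, t2 ^ 2] +
      ((s1 * t - s * t1) * (s2 * t - s * t2) * (s1 * t2 - s2 * t1)) •
        φ ![s3 ^ 2, s3 * t3, t3 ^ 2] := by
    simp only [← map_smul, ← map_add]
    congr 1
    ext i
    fin_cases i <;> simp <;> ring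
  rw [← Submodule.smul_mem_iff W (mul_ne_zero (mul_ne_zero d12 d13) d23), key]
  exact W.add_mem (W.add_mem (W.smul_mem _ haW) (W.smul_mem _ hbW)) (W.smul_mem _ hcW)

lemma ver_span {F : Type} [Field F] {P : Type} {L : Set (Set P)}
    {V : Type} [AddCommGroup V] [Module F V]
    (ε : VerEmb F P L V) (S : Set P) (hS : ThreeGenerates L S) :
    (⨆ p ∈ S, ε.toFun p) = ⊤ := by
  have hT : Is3Subspace L {p | ε.toFun p ≤ ⨆ p ∈ S, ε.toFun p} := by
    rintro l hl ⟨x, ⟨hx, hxW⟩, y, ⟨hy, hyW⟩, z, ⟨hz, hzW⟩, hxy, hxz, hyz⟩ p hp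
    exact conic_span (ε.conic l hl) (Set.mem_image_of_mem _ hx) (Set.mem_image_of_mem _ hy)
      (Set.mem_image_of_mem _ hz) (Set.mem_image_of_mem _ hp) (ε.injective.ne hxy)
      (ε.injective.ne hxz) (ε.injective.ne hyz) hxW hyW hzW
  rw [eq_top_iff, ← ε.spans]
  refine iSup_le fun p => ?_
  have hp : p ∈ ThreeSpan L S := by rw [hS]; trivial
  exact hp _ ⟨hT, fun q hq => by
    rw [Set.mem_setOf_eq]
    exact le_iSup₂_of_le (f := fun p (_ : p ∈ S) => ε.toFun p) q hq le_rfl⟩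

lemma ver_rank {F : Type} [Field F] {P : Type} {L : Set (Set P)}
    {V : Type} [AddCommGroup V] [Module F V]
    (ε : VerEmb F P L V) (S : Set P) (hS : ThreeGenerates L S) :
    Module.rank F V ≤ #↥S := by
  choose w _ hw using ε.point
  have h : Submodule.span F (w '' S) = ⊤ := by
    rw [← ver_span ε S hS, ← Set.biUnion_of_singleton (w '' S), Set.biUnion_image]
    simp only [Submodule.span_iUnion, hw]
  rw [← rank_top F V, ← h]
  exact (rank_span_le _).trans Cardinal.mk_image_le

/-- Let `Γ = (P,L)` be a point-line geometry, `ε` a veronesean embedding of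
`Γ` in `PG(V)` and `S ⊆ P` a 3-generating set.  Then `{ε(p) : p ∈ S}` spans `V`; in
particular `dim V ≤ |S|`, so the dimension of every veronesean embedding of `Γ` is at most
the 3-generating rank `grk₃(Γ)`. -/
theorem statement9 (F : Type) [Field F] {P : Type} (L : Set (Set P))
    (hgeom : ∀ l ∈ L, ∃ x ∈ l, ∃ y ∈ l, x ≠ y)
    (V : Type) [AddCommGroup V] [Module F V]
    (ε : VerEmb F P L V) (S : Set P) (hS : ThreeGenerates L S) :
    (⨆ p ∈ S, ε.toFun p) = ⊤ ∧
    Module.rank F V ≤ #↥S ∧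
    Module.rank F V ≤ grk3 L := by
  refine ⟨ver_span ε S hS, ver_rank ε S hS, ?_⟩
  refine le_csInf ⟨_, S, hS, rfl⟩ ?_
  rintro c ⟨X, hX, rfl⟩
  exact ver_rank ε X hX
end

section
/- Let q be an odd prime power and F = F_q, and suppose −1 is a non-square in F. Then there exists g ∈ SL(2,F) with g({a_∞, a_0}) = {a_∞, a_0} and g(A^□) = A^◇. Consequently, SL(2,F) is transitive on the set of pairs ({a, a'}, a'') where a, a', a'' are pairwise distinct points of PG(1,F); that is, for any two triples (a,a',a'') and (b,b',b'') of pairwise distinct points of PG(1,F) there is g ∈ SL(2,F) with g({a,a'}) = {b,b'} and g(a'') = b''. -/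
/-- `SL(2,F)`. -/
abbrev SL2 (F : Type*) [Field F] := Matrix.SpecialLinearGroup (Fin 2) F

/-- The action of `g ∈ SL(2,F)` on subspaces of `F²`, through its linear action on `F²`. -/
def pgact (F : Type*) [Field F] (g : SL2 F) (W : Submodule F (Fin 2 → F)) :
    Submodule F (Fin 2 → F) :=
  Submodule.map (Matrix.toLin' (g : Matrix (Fin 2) (Fin 2) F)) W

/-- The point `⟨x⟩` of `PG(1,F)`. -/
def ptv (F : Type*) [Field F] (x : Fin 2 → F) : Submodule F (Fin 2 → F) :=
  Submodule.span F {x}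

/-- The point `a_∞ = ⟨(1,0)⟩` of `PG(1,F)`. -/
def aInfty (F : Type*) [Field F] : Submodule F (Fin 2 → F) := ptv F ![1, 0]

/-- The point `a_λ = ⟨(λ,1)⟩` of `PG(1,F)`. -/
def aPt (F : Type*) [Field F] (l : F) : Submodule F (Fin 2 → F) := ptv F ![l, 1]

/-- `A^□ = {a_λ : λ a nonzero square}`. -/
def ASq (F : Type*) [Field F] : Set (Submodule F (Fin 2 → F)) :=
  {W | ∃ l : F, l ≠ 0 ∧ IsSquare l ∧ W = aPt F l}

/-- `A^◇ = {a_λ : λ a non-square}`. -/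
def ANSq (F : Type*) [Field F] : Set (Submodule F (Fin 2 → F)) :=
  {W | ∃ l : F, ¬ IsSquare l ∧ W = aPt F l}

theorem pgact_ptv (F : Type*) [Field F] (g : SL2 F) (x : Fin 2 → F) :
    pgact F g (ptv F x) = ptv F (Matrix.mulVec (g : Matrix (Fin 2) (Fin 2) F) x) := by
  simp [pgact, ptv, Submodule.map_span, Matrix.toLin'_apply]

theorem pgact_mul (F : Type*) [Field F] (g h : SL2 F) (W : Submodule F (Fin 2 → F)) :
    pgact F (g * h) W = pgact F g (pgact F h W) := by
  simp [pgact, Matrix.toLin'_mul, Submodule.map_comp]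

theorem pgact_one (F : Type*) [Field F] (W : Submodule F (Fin 2 → F)) :
    pgact F 1 W = W := by
  simp [pgact]

theorem ptv_smul (F : Type*) [Field F] (c : F) (hc : c ≠ 0) (x : Fin 2 → F) :
    ptv F (c • x) = ptv F x :=
  Submodule.span_singleton_smul_eq (IsUnit.mk0 c hc) x

theorem exists_ptv (F : Type*) [Field F] (a : Submodule F (Fin 2 → F))
    (h : Module.finrank F a = 1) : ∃ v : Fin 2 → F, v ≠ 0 ∧ a = ptv F v := by
  obtain ⟨v, hv, h⟩ := finrank_eq_one_iff'.1 h
  refine ⟨v, by simpa using hv, le_antisymm ?_ ?_⟩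
  · intro w hw
    obtain ⟨c, hc⟩ := h ⟨w, hw⟩
    exact Submodule.mem_span_singleton.2 ⟨c, congrArg Subtype.val hc⟩
  · exact (Submodule.span_singleton_le_iff_mem _ _).2 v.2

theorem ptv_eq_of_det (F : Type*) [Field F] (u v : Fin 2 → F) (hu : u ≠ 0) (hv : v ≠ 0)
    (h : u 0 * v 1 - u 1 * v 0 = 0) : ptv F u = ptv F v := by
  by_cases h0 : u 0 = 0
  · have h1 : u 1 ≠ 0 := fun h1 => hu (by ext i; fin_cases i <;> simp [h0, h1])
    have hv0 : v 0 = 0 := by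
      have : u 1 * v 0 = 0 := by rw [h0] at h; linear_combination -h
      exact (mul_eq_zero.1 this).resolve_left h1
    have hv1 : v 1 ≠ 0 := fun h1 => hv (by ext i; fin_cases i <;> simp [hv0, h1])
    rw [← ptv_smul F (v 1) hv1 u, ← ptv_smul F (u 1) h1 v]
    congr 1
    ext i; fin_cases i
    · simp [h0, hv0]
    · simp; ring
  · have hv0 : v 0 ≠ 0 := by
      intro hv0
      have : u 0 * v 1 = 0 := by rw [hv0] at h; linear_combination h
      have hv1 := (mul_eq_zero.1 this).resolve_left h0
      exact hv (by ext i; fin_cases i <;> simp [hv0, hv1])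
    rw [← ptv_smul F (v 0) hv0 u, ← ptv_smul F (u 0) h0 v]
    congr 1
    ext i; fin_cases i
    · simp; ring
    · simp; linear_combination -h

theorem isSquare_or_neg (F : Type) [Field F] [Fintype F] (hns : ¬ IsSquare (-1 : F))
    (d : F) : IsSquare d ∨ IsSquare (-d) := by
  classical
  by_cases hd : d = 0
  · left; simp [hd]
  by_cases h : IsSquare d
  · exact Or.inl h
  right
  have h1 := quadraticChar_neg_one_iff_not_isSquare.2 h
  have h2 := quadraticChar_neg_one_iff_not_isSquare.2 hns
  rw [← quadraticChar_one_iff_isSquare (neg_ne_zero.2 hd), ← neg_one_mul, map_mul, h1, h2]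
  norm_num

/-- Two spanning vectors with square determinant give an element of `SL(2,F)`. -/
theorem exists_of_square (F : Type) [Field F] (u v : Fin 2 → F)
    (hd : u 0 * v 1 - u 1 * v 0 ≠ 0) (hs : IsSquare (u 0 * v 1 - u 1 * v 0)) :
    ∃ g : SL2 F, pgact F g (aInfty F) = ptv F u ∧ pgact F g (aPt F 0) = ptv F v ∧
      pgact F g (aPt F 1) = ptv F (u + v) := by
  obtain ⟨s, hs⟩ := hs
  have s0 : s ≠ 0 := by rintro rfl; simp at hs; exact hd hs
  have s1 := inv_ne_zero s0
  have hdet : (!![s⁻¹ * u 0, s⁻¹ * v 0; s⁻¹ * u 1, s⁻¹ * v 1]).det = 1 := by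
    rw [Matrix.det_fin_two_of]
    field_simp
    linear_combination hs
  let g : SL2 F := ⟨!![s⁻¹ * u 0, s⁻¹ * v 0; s⁻¹ * u 1, s⁻¹ * v 1], hdet⟩
  refine ⟨g, ?_, ?_, ?_⟩
  · rw [← ptv_smul F _ s1 u, aInfty, pgact_ptv]
    congr 1
    ext i; fin_cases i <;> simp [g, Matrix.mulVec, dotProduct, Fin.sum_univ_two]
  · rw [← ptv_smul F _ s1 v, aPt, pgact_ptv]
    congr 1
    ext i; fin_cases i <;> simp [g, Matrix.mulVec, dotProduct, Fin.sum_univ_two]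
  · rw [← ptv_smul F _ s1 (u + v), aPt, pgact_ptv]
    congr 1
    ext i; fin_cases i <;> simp [g, Matrix.mulVec, dotProduct, Fin.sum_univ_two, mul_add]

theorem exists_std (F : Type) [Field F] [Fintype F] (hns : ¬ IsSquare (-1 : F))
    (a a' a'' : Submodule F (Fin 2 → F)) (h : Module.finrank F a = 1)
    (h' : Module.finrank F a' = 1) (h'' : Module.finrank F a'' = 1)
    (n1 : a ≠ a') (n2 : a ≠ a'') (n3 : a' ≠ a'') :
    ∃ g : SL2 F, pgact F g '' {aInfty F, aPt F 0} = {a, a'} ∧ pgact F g (aPt F 1) = a'' := by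
  obtain ⟨u, hu, rfl⟩ := exists_ptv F a h
  obtain ⟨v, hv, rfl⟩ := exists_ptv F a' h'
  obtain ⟨w, hw, rfl⟩ := exists_ptv F a'' h''
  have d1 : u 0 * v 1 - u 1 * v 0 ≠ 0 := fun e => n1 (ptv_eq_of_det F u v hu hv e)
  have d2 : u 0 * w 1 - u 1 * w 0 ≠ 0 := fun e => n2 (ptv_eq_of_det F u w hu hw e)
  have d3 : w 0 * v 1 - w 1 * v 0 ≠ 0 := fun e => n3 (ptv_eq_of_det F w v hw hv e).symm
  rw [← ptv_smul F _ d3 u, ← ptv_smul F _ d2 v, ← ptv_smul F _ d1 w]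
  have hsum : (u 0 * v 1 - u 1 * v 0) • w =
      (w 0 * v 1 - w 1 * v 0) • u + (u 0 * w 1 - u 1 * w 0) • v := by
    ext i; fin_cases i <;> simp <;> ring
  rw [hsum]
  set x := (w 0 * v 1 - w 1 * v 0) • u with hx
  set y := (u 0 * w 1 - u 1 * w 0) • v with hy
  have d : x 0 * y 1 - x 1 * y 0 ≠ 0 := by
    have : x 0 * y 1 - x 1 * y 0 = (w 0 * v 1 - w 1 * v 0) * (u 0 * w 1 - u 1 * w 0) *
        (u 0 * v 1 - u 1 * v 0) := by
      simp [hx, hy]; ring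
    rw [this]
    exact mul_ne_zero (mul_ne_zero d3 d2) d1
  rcases isSquare_or_neg F hns (x 0 * y 1 - x 1 * y 0) with hs | hs
  · obtain ⟨g, e1, e2, e3⟩ := exists_of_square F x y d hs
    exact ⟨g, by rw [Set.image_pair, e1, e2], e3⟩
  · have e : -(x 0 * y 1 - x 1 * y 0) = y 0 * x 1 - y 1 * x 0 := by ring
    obtain ⟨g, e1, e2, e3⟩ := exists_of_square F y x (e ▸ neg_ne_zero.2 d) (e ▸ hs)
    exact ⟨g, by rw [Set.image_pair, e1, e2, Set.pair_comm], by rw [e3, add_comm]⟩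

theorem pg_swap_exists (F : Type) [Field F] [Fintype F] (hns : ¬ IsSquare (-1 : F)) :
    ∃ g : SL2 F, pgact F g '' {aInfty F, aPt F 0} = {aInfty F, aPt F 0} ∧
        pgact F g '' ASq F = ANSq F := by
  let g : SL2 F := ⟨!![0, -1; 1, 0], by simp [Matrix.det_fin_two_of]⟩
  have e1 : pgact F g (aInfty F) = aPt F 0 := by
    rw [aInfty, aPt, pgact_ptv]
    congr 1
    ext i; fin_cases i <;> simp [g, Matrix.mulVec, dotProduct, Fin.sum_univ_two]
  have e2 : pgact F g (aPt F 0) = aInfty F := by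
    rw [aInfty, aPt, pgact_ptv, ← ptv_smul F (-1) (by simp) ![1, 0]]
    congr 1
    ext i; fin_cases i <;> simp [g, Matrix.mulVec, dotProduct, Fin.sum_univ_two]
  have e3 : ∀ l : F, l ≠ 0 → pgact F g (aPt F l) = aPt F (-l⁻¹) := by
    intro l hl
    rw [aPt, aPt, pgact_ptv, ← ptv_smul F l hl ![-l⁻¹, 1]]
    congr 1
    ext i; fin_cases i <;> simp [g, Matrix.mulVec, dotProduct, Fin.sum_univ_two, hl]
  refine ⟨g, by rw [Set.image_pair, e1, e2, Set.pair_comm], ?_⟩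
  ext W
  constructor
  · rintro ⟨_, ⟨l, hl, hs, rfl⟩, rfl⟩
    refine ⟨-l⁻¹, fun h => hns ?_, e3 l hl⟩
    have := h.mul hs
    rwa [neg_mul, inv_mul_cancel₀ hl] at this
  · rintro ⟨l, hs, rfl⟩
    have hl : l ≠ 0 := by rintro rfl; simp at hs
    have hl' : -l⁻¹ ≠ 0 := neg_ne_zero.2 (inv_ne_zero hl)
    refine ⟨_, ⟨-l⁻¹, hl', ?_, rfl⟩, ?_⟩
    · have := ((isSquare_or_neg F hns l).resolve_left hs).inv
      rwa [inv_neg] at this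
    · rw [e3 _ hl']
      simp [inv_neg]

/-- Let `q` be an odd prime power, `F = F_q` (formalized: `F` a finite field
of odd cardinality), and suppose `−1` is a non-square in `F`.  Then some `g ∈ SL(2,F)`
stabilizes `{a_∞, a_0}` and maps `A^□` onto `A^◇`.  Consequently `SL(2,F)` is transitive on
pairs `({a,a'}, a'')` of pairwise distinct points of `PG(1,F)`. -/
theorem statement11 (F : Type) [Field F] [Fintype F] (hodd : Odd (Fintype.card F))
    (hns : ¬ IsSquare (-1 : F)) :
    (∃ g : SL2 F, pgact F g '' {aInfty F, aPt F 0} = {aInfty F, aPt F 0} ∧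
        pgact F g '' ASq F = ANSq F) ∧
    (∀ a a' a'' b b' b'' : Submodule F (Fin 2 → F),
      Module.finrank F ↥a = 1 → Module.finrank F ↥a' = 1 → Module.finrank F ↥a'' = 1 →
      Module.finrank F ↥b = 1 → Module.finrank F ↥b' = 1 → Module.finrank F ↥b'' = 1 →
      a ≠ a' → a ≠ a'' → a' ≠ a'' → b ≠ b' → b ≠ b'' → b' ≠ b'' →
      ∃ g : SL2 F, pgact F g '' {a, a'} = {b, b'} ∧ pgact F g a'' = b'') := by
  refine ⟨pg_swap_exists F hns, ?_⟩
  intro a a' a'' b b' b'' h1 h2 h3 k1 k2 k3 n1 n2 n3 m1 m2 m3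
  obtain ⟨g, hg, hg'⟩ := exists_std F hns a a' a'' h1 h2 h3 n1 n2 n3
  obtain ⟨k, hk, hk'⟩ := exists_std F hns b b' b'' k1 k2 k3 m1 m2 m3
  have key : ∀ W, pgact F (k * g⁻¹) (pgact F g W) = pgact F k W := by
    intro W
    rw [← pgact_mul, inv_mul_cancel_right]
  refine ⟨k * g⁻¹, ?_, ?_⟩
  · rw [← hg, ← hk, Set.image_image]
    simp only [key]
  · rw [← hg', key, hk']
end

section
/- Let F be a field of characteristic 2 and m ≥ 2 an integer. In F^m ⊗ F^m let W be the span of {v ⊗ v : v ∈ F^m} and A the span of {u ⊗ w + w ⊗ u : u, w ∈ F^m}. Then A ⊆ W, dim A = m(m−1)/2, dim W = m(m+1)/2, and both A and W are invariant under the map g ⊗ g for every g ∈ GL(m,F); in particular A is a proper nontrivial GL(m,F)-submodule of W. -/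
open TensorProduct

namespace S13

theorem add_self {F V : Type*} [Field F] [CharP F 2] [AddCommGroup V] [Module F V] (x : V) :
    x + x = 0 := by
  rw [← two_smul F x, CharTwo.two_eq_zero, zero_smul]

theorem card_lt (m : ℕ) :
    Fintype.card {p : Fin m × Fin m // p.1 < p.2} = m * (m - 1) / 2 := by
  rw [Fintype.card_subtype, Finset.card_filter, Fintype.sum_prod_type_right]
  rw [← Finset.sum_range_id, ← Fin.sum_univ_eq_sum_range (fun i => i)]
  refine Finset.sum_congr rfl fun j _ => ?_
  rw [← Finset.card_filter]
  have : (Finset.univ.filter fun i : Fin m => i < j) = Finset.Iio j := by ext; simp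
  simp [this]

theorem card_le (m : ℕ) :
    Fintype.card {p : Fin m × Fin m // p.1 ≤ p.2} = m * (m + 1) / 2 := by
  rw [Fintype.card_subtype, Finset.card_filter, Fintype.sum_prod_type_right]
  have h := Finset.sum_range_id (m + 1)
  rw [Finset.sum_range_succ', Nat.add_sub_cancel, add_zero, mul_comm] at h
  rw [← h, ← Fin.sum_univ_eq_sum_range (fun i => i + 1)]
  refine Finset.sum_congr rfl fun j _ => ?_
  rw [← Finset.card_filter]
  have : (Finset.univ.filter fun i : Fin m => i ≤ j) = Finset.Iic j := by ext; simp
  simp [this]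

section
variable (F : Type*) [Field F] (m : ℕ)

/-- The standard basis vector. -/
noncomputable abbrev e (i : Fin m) : Fin m → F := Pi.basisFun F (Fin m) i

/-- The generators of W. -/
noncomputable def gw (p : Fin m × Fin m) : (Fin m → F) ⊗[F] (Fin m → F) :=
  if p.1 = p.2 then e F m p.1 ⊗ₜ e F m p.2
  else e F m p.1 ⊗ₜ e F m p.2 + e F m p.2 ⊗ₜ e F m p.1

/-- Coordinates. -/
noncomputable def co (q : Fin m × Fin m) : (Fin m → F) ⊗[F] (Fin m → F) →ₗ[F] F :=
  ((Pi.basisFun F (Fin m)).tensorProduct (Pi.basisFun F (Fin m))).coord q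

theorem co_tmul (q : Fin m × Fin m) (i j : Fin m) :
    co F m q (e F m i ⊗ₜ e F m j) = if (i, j) = q then 1 else 0 := by
  rw [co, Module.Basis.coord_apply, ← Module.Basis.tensorProduct_apply, Module.Basis.repr_self,
    Finsupp.single_apply]

theorem co_gw (q p : Fin m × Fin m) (hq : q.1 ≤ q.2) (hp : p.1 ≤ p.2) :
    co F m q (gw F m p) = if p = q then 1 else 0 := by
  obtain ⟨i, j⟩ := p
  obtain ⟨k, l⟩ := q
  simp only at hp hq
  unfold gw
  simp only
  split_ifs with h1 h2 h2
  · rw [co_tmul, if_pos h2]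
  · rw [co_tmul, if_neg h2]
  · rw [map_add, co_tmul, co_tmul, if_pos h2, if_neg, add_zero]
    grind
  · rw [map_add, co_tmul, co_tmul, if_neg h2, if_neg, add_zero]
    grind

theorem li_le : LinearIndependent F (fun p : {p : Fin m × Fin m // p.1 ≤ p.2} => gw F m p.1) := by
  rw [Fintype.linearIndependent_iff]
  intro c hc q
  have := congrArg (co F m q.1) hc
  rw [map_sum, map_zero] at this
  rw [← this, Finset.sum_eq_single q]
  · rw [map_smul, co_gw _ _ _ _ q.2 q.2]; simp
  · intro p _ hp
    rw [map_smul, co_gw _ _ _ _ q.2 p.2, if_neg (fun h => hp (Subtype.ext h)), smul_zero]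
  · simp

theorem li_lt : LinearIndependent F (fun p : {p : Fin m × Fin m // p.1 < p.2} => gw F m p.1) :=
  (li_le F m).comp (fun p : {p : Fin m × Fin m // p.1 < p.2} => ⟨p.1, p.2.le⟩)
    (fun p q h => Subtype.ext (congrArg (fun x => x.1) h))

theorem sym_mem [CharP F 2] (S : Submodule F ((Fin m → F) ⊗[F] (Fin m → F)))
    (hS : ∀ p : Fin m × Fin m, p.1 < p.2 → gw F m p ∈ S) (u w : Fin m → F) :
    u ⊗ₜ[F] w + w ⊗ₜ[F] u ∈ S := by
  have key : ∀ i j, e F m i ⊗ₜ[F] e F m j + e F m j ⊗ₜ[F] e F m i ∈ S := by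
    intro i j
    rcases lt_trichotomy i j with h | h | h
    · have := hS (i, j) h
      rwa [gw, if_neg h.ne] at this
    · subst h
      rw [add_self (F := F)]; exact S.zero_mem
    · have := hS (j, i) h
      rwa [gw, if_neg h.ne, add_comm] at this
  have hu := (Pi.basisFun F (Fin m)).mem_span u
  have hw := (Pi.basisFun F (Fin m)).mem_span w
  induction hu using Submodule.span_induction with
  | zero => simp
  | add x y _ _ hx hy =>
    rw [TensorProduct.add_tmul, TensorProduct.tmul_add, add_add_add_comm]
    exact S.add_mem hx hy
  | smul c x _ hx =>
    rw [TensorProduct.tmul_smul, ← TensorProduct.smul_tmul', ← smul_add]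
    exact S.smul_mem c hx
  | mem x hx =>
    obtain ⟨i, rfl⟩ := hx
    induction hw using Submodule.span_induction with
    | zero => simp
    | add x y _ _ hx hy =>
      rw [TensorProduct.add_tmul, TensorProduct.tmul_add, add_add_add_comm]
      exact S.add_mem hx hy
    | smul c x _ hx =>
      rw [TensorProduct.tmul_smul, ← TensorProduct.smul_tmul', ← smul_add]
      exact S.smul_mem c hx
    | mem x hx =>
      obtain ⟨j, rfl⟩ := hx
      exact key i j

theorem sq_mem [CharP F 2] (S : Submodule F ((Fin m → F) ⊗[F] (Fin m → F)))
    (hS : ∀ p : Fin m × Fin m, p.1 ≤ p.2 → gw F m p ∈ S) (v : Fin m → F) :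
    v ⊗ₜ[F] v ∈ S := by
  have hv := (Pi.basisFun F (Fin m)).mem_span v
  induction hv using Submodule.span_induction with
  | zero => simp
  | add x y _ _ hx hy =>
    have h := sym_mem F m S (fun p hp => hS p hp.le) x y
    have : (x + y) ⊗ₜ[F] (x + y) = x ⊗ₜ[F] x + y ⊗ₜ[F] y + (x ⊗ₜ[F] y + y ⊗ₜ[F] x) := by
      rw [TensorProduct.add_tmul, TensorProduct.tmul_add, TensorProduct.tmul_add]; abel
    rw [this]
    exact S.add_mem (S.add_mem hx hy) h
  | smul c x _ hx =>
    rw [TensorProduct.tmul_smul, ← TensorProduct.smul_tmul']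
    exact S.smul_mem c (S.smul_mem c hx)
  | mem x hx =>
    obtain ⟨i, rfl⟩ := hx
    have := hS (i, i) le_rfl
    rwa [gw, if_pos rfl] at this

theorem sym_mem_W (u w : Fin m → F) : u ⊗ₜ[F] w + w ⊗ₜ[F] u ∈
    Submodule.span F {x | ∃ v : Fin m → F, x = v ⊗ₜ[F] v} := by
  have : u ⊗ₜ[F] w + w ⊗ₜ[F] u = (u + w) ⊗ₜ[F] (u + w) - u ⊗ₜ[F] u - w ⊗ₜ[F] w := by
    rw [TensorProduct.add_tmul, TensorProduct.tmul_add, TensorProduct.tmul_add]; abel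
  rw [this]
  exact Submodule.sub_mem _ (Submodule.sub_mem _ (Submodule.subset_span ⟨_, rfl⟩)
    (Submodule.subset_span ⟨_, rfl⟩)) (Submodule.subset_span ⟨_, rfl⟩)

theorem A_eq [CharP F 2] :
    Submodule.span F {x | ∃ u w : Fin m → F, x = u ⊗ₜ[F] w + w ⊗ₜ[F] u} =
    Submodule.span F (Set.range fun p : {p : Fin m × Fin m // p.1 < p.2} => gw F m p.1) := by
  apply le_antisymm
  · rw [Submodule.span_le]
    rintro _ ⟨u, w, rfl⟩
    refine sym_mem F m _ (fun p hp => ?_) u w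
    exact Submodule.subset_span ⟨⟨p, hp⟩, rfl⟩
  · rw [Submodule.span_le]
    rintro _ ⟨⟨p, hp⟩, rfl⟩
    apply Submodule.subset_span
    exact ⟨_, _, by simp only [gw]; rw [if_neg hp.ne]⟩

theorem W_eq [CharP F 2] :
    Submodule.span F {x | ∃ v : Fin m → F, x = v ⊗ₜ[F] v} =
    Submodule.span F (Set.range fun p : {p : Fin m × Fin m // p.1 ≤ p.2} => gw F m p.1) := by
  apply le_antisymm
  · rw [Submodule.span_le]
    rintro _ ⟨v, rfl⟩
    refine sq_mem F m _ (fun p hp => ?_) v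
    exact Submodule.subset_span ⟨⟨p, hp⟩, rfl⟩
  · rw [Submodule.span_le]
    rintro _ ⟨⟨p, hp⟩, rfl⟩
    by_cases h : p.1 = p.2
    · apply Submodule.subset_span
      exact ⟨e F m p.2, by simp only [gw]; rw [if_pos h, h]⟩
    · simp only [gw]
      rw [if_neg h]
      exact sym_mem_W F m _ _

end

end S13

/-- Let `F` be a field of characteristic 2 and `m ≥ 2`.  In `F^m ⊗ F^m` let
`W` be the span of `{v ⊗ v}` and `A` the span of `{u ⊗ w + w ⊗ u}`.  Then `A ⊆ W`,
`dim A = m(m−1)/2`, `dim W = m(m+1)/2`, both `A` and `W` are invariant under `g ⊗ g` for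
every `g ∈ GL(m,F)`, and `A` is a proper nontrivial submodule of `W`. -/
theorem statement13 (F : Type*) [Field F] [CharP F 2] (m : ℕ) (hm : 2 ≤ m)
    (W A : Submodule F (TensorProduct F (Fin m → F) (Fin m → F)))
    (hW : W = Submodule.span F {x | ∃ v : Fin m → F, x = v ⊗ₜ[F] v})
    (hA : A = Submodule.span F
      {x | ∃ u w : Fin m → F, x = u ⊗ₜ[F] w + w ⊗ₜ[F] u}) :
    A ≤ W ∧
    Module.finrank F ↥A = m * (m - 1) / 2 ∧
    Module.finrank F ↥W = m * (m + 1) / 2 ∧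
    (∀ g : (Fin m → F) ≃ₗ[F] (Fin m → F),
      Submodule.map (TensorProduct.map g.toLinearMap g.toLinearMap) A = A ∧
      Submodule.map (TensorProduct.map g.toLinearMap g.toLinearMap) W = W) ∧
    A ≠ ⊥ ∧ A ≠ W := by
  have fA : Module.finrank F ↥A = m * (m - 1) / 2 := by
    rw [hA, S13.A_eq, finrank_span_eq_card (S13.li_lt F m), S13.card_lt]
  have fW : Module.finrank F ↥W = m * (m + 1) / 2 := by
    rw [hW, S13.W_eq, finrank_span_eq_card (S13.li_le F m), S13.card_le]
  obtain ⟨k, rfl⟩ := Nat.exists_eq_add_of_le hm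
  have e1 : (2 + k) * (2 + k - 1) = k * (k + 1) + 2 * (k + 1) := by
    rw [show 2 + k - 1 = k + 1 by omega]; ring
  have e2 : (2 + k) * (2 + k + 1) = k * (k + 1) + 2 * (2 * k + 3) := by ring
  refine ⟨?_, fA, fW, fun g => ⟨?_, ?_⟩, ?_, ?_⟩
  · rw [hA, Submodule.span_le]
    rintro _ ⟨u, w, rfl⟩
    rw [hW]
    exact S13.sym_mem_W F _ u w
  · rw [hA, Submodule.map_span]
    congr 1
    ext x
    constructor
    · rintro ⟨_, ⟨u, w, rfl⟩, rfl⟩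
      exact ⟨g u, g w, by simp⟩
    · rintro ⟨u, w, rfl⟩
      exact ⟨_, ⟨g.symm u, g.symm w, rfl⟩, by simp⟩
  · rw [hW, Submodule.map_span]
    congr 1
    ext x
    constructor
    · rintro ⟨_, ⟨u, rfl⟩, rfl⟩
      exact ⟨g u, by simp⟩
    · rintro ⟨u, rfl⟩
      exact ⟨_, ⟨g.symm u, rfl⟩, by simp⟩
  · intro h
    rw [h, finrank_bot, e1] at fA
    omega
  · intro h
    rw [h, fW, e1, e2] at fA
    omega
end

section
/- Let F be a perfect field of characteristic 2, l a 2-dimensional subspace of F⁴, and x ∈ F⁴ a nonzero vector such that ν₄(x) lies in the linear span of {ν₄(z) : z ∈ l} in F^10. Then x ∈ l. Equivalently, the plane spanned by the conic ν₄(l) contains no point of the veronesean image of PG(3,F) outside the conic itself. -/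
/-- Let `F` be a perfect field of characteristic 2 (squaring is surjective),
`l` a 2-dimensional subspace of `F⁴`, and `x ∈ F⁴` a nonzero vector with `ν₄(x)` in the
span of `ν₄(l)`.  Then `x ∈ l`: the plane spanned by the conic `ν₄(l)` contains no point of
the veronesean image of `PG(3,F)` outside the conic itself. -/
theorem statement17 (F : Type*) [Field F] [CharP F 2]
    (hperf : Function.Surjective fun x : F => x ^ 2)
    (l : Submodule F (Fin 4 → F)) (hl : Module.finrank F ↥l = 2)
    (x : Fin 4 → F) (hx : x ≠ 0)
    (hmem : nu4 F x ∈ Submodule.span F (nu4 F '' (l : Set (Fin 4 → F)))) :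
    x ∈ l := by
  by_contra hxl
  obtain ⟨f, hfx, hf⟩ := Submodule.exists_dual_map_eq_bot_of_notMem hxl inferInstance
  let L : (Sym2 (Fin 4) → F) →ₗ[F] F :=
    ∑ i : Fin 4, ∑ j : Fin 4,
      (f (Pi.single i 1) * f (Pi.single j 1)) • LinearMap.proj (s(i, j))
  have hL : ∀ z, L (nu4 F z) = f z * f z := by
    intro z
    have hz : f z = ∑ i, z i * f (Pi.single i 1) := by
      conv_lhs => rw [pi_eq_sum_univ' z]
      simp [map_sum]
    rw [hz, Finset.sum_mul_sum]
    simp only [L, LinearMap.sum_apply, LinearMap.smul_apply, LinearMap.proj_apply, nu4,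
      Sym2.lift_mk, smul_eq_mul]
    refine Finset.sum_congr rfl fun i _ => Finset.sum_congr rfl fun j _ => ?_
    ring
  have hle : Submodule.span F (nu4 F '' (l : Set (Fin 4 → F))) ≤ LinearMap.ker L := by
    rw [Submodule.span_le]
    rintro _ ⟨z, hz, rfl⟩
    have h0 : f z = 0 := by
      have : f z ∈ l.map f := Submodule.mem_map_of_mem hz
      rw [hf] at this
      simpa using this
    simp [hL, h0]
  have h := hle hmem
  rw [LinearMap.mem_ker, hL] at h
  exact hfx (mul_self_eq_zero.mp h)
end
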